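/- arXiv:math/0403171 — 2 statements merged into one kernel-verified Lean document; each statement's English description precedes it below -/
import Mathlib

section
/- Endpoint duality: in the Coxeter setting below, assume W is finite with longest element w_0. Then for every continuous path π : [0,T] → V with π(0) = 0, one has (E_{w_0} π)(T) = w_0( (P_{w_0} π)(T) ). -/
/-- The Pitman transform associated with a pair `(α, α∨)`:
`P_α π (t) = π t − (inf_{0 ≤ s ≤ t} α∨(π s)) • α`. -/
noncomputable def pitman {V : Type*} [AddCommGroup V] [Module ℝ V]
    (α : V) (αv : Module.Dual ℝ V) (π : ℝ → V) : ℝ → V :=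
  fun t => π t - sInf ((fun s => αv (π s)) '' Set.Icc 0 t) • α

/-- The composite Pitman transform `P_{α_{s₁}} ∘ ⋯ ∘ P_{α_{s_l}}` along a word
`l = [s₁, …, s_l]` in the generators. -/
noncomputable def pitmanWord {V : Type*} [AddCommGroup V] [Module ℝ V] {B : Type*}
    (α : B → V) (αv : B → Module.Dual ℝ V) (l : List B) : (ℝ → V) → (ℝ → V) :=
  l.foldr (fun s f => pitman (α s) (αv s) ∘ f) id

/-- The co-Pitman transform `E_α = κ ∘ P_α ∘ κ` on paths on `[0,T]`:
`E_α π (t) = π t − (inf_{t ≤ s ≤ T} α∨(π s)) • α + (inf_{0 ≤ s ≤ T} α∨(π s)) • α`. -/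
noncomputable def copitman {V : Type*} [AddCommGroup V] [Module ℝ V]
    (T : ℝ) (α : V) (αv : Module.Dual ℝ V) (π : ℝ → V) : ℝ → V :=
  fun t => π t - sInf ((fun s => αv (π s)) '' Set.Icc t T) • α
            + sInf ((fun s => αv (π s)) '' Set.Icc 0 T) • α

/-- The composite co-Pitman transform `E_{α_{s₁}} ∘ ⋯ ∘ E_{α_{s_l}}` along a word. -/
noncomputable def copitmanWord {V : Type*} [AddCommGroup V] [Module ℝ V] {B : Type*}
    (T : ℝ) (α : B → V) (αv : B → Module.Dual ℝ V) (l : List B) : (ℝ → V) → (ℝ → V) :=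
  l.foldr (fun s f => copitman T (α s) (αv s) ∘ f) id

/-!
The energy of `v`, the sum of the squares of the coordinates of all `w v` along the coroots, is a
`W`-invariant quadratic form. A Pitman transform can only raise the energy of the endpoint of a
path, and where it keeps the energy, it moves the endpoint within its `W`-orbit. By the braid
relations and Matsumoto's theorem, `P_{w₀}` can be computed along a word that ends in any given
generator, and `P_α ∘ E_α = P_α`; hence `P_{w₀} ∘ E_w = P_{w₀}` for every `w`. For `w = w₀`, on the
path and on its reversal, this bounds the energies of the endpoints of `E_{w₀} π` and `P_{w₀} π` by
each other, so the endpoints lie in one orbit. Both `-(E_{w₀} π)(T)` and `-w₀ ((P_{w₀} π)(T))` are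
dominant, and an orbit contains at most one dominant vector.

For the braid relations, a composition of Pitman transforms along an alternating word of length `n`
subtracts iterated infima over chains `t ≥ u₁ ≥ ⋯ ≥ uₙ ≥ 0`, in which the coordinate at `u_k` has
the quantum integer `[k] = sin (kπ / m) / sin (π / m)` as its coefficient. Since `[m] = 0`, the
innermost infimum drops out when `n = m`, and the two alternating words give the same result.
-/

namespace Pitman

section BondWeight

/-- The weight `2 cos (π / m)` of an edge labelled `m` of a Coxeter graph. The label `m = 0` stands
for `m = ∞` and gets the correct weight `2`, because `π / 0 = 0`. -/
noncomputable def bondWeight (m : ℕ) : ℝ := 2 * Real.cos (Real.pi / m)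

/-- The quantum integer `[k] = sin (kπ / m) / sin (π / m)`, as a value of a Chebyshev polynomial
so that `[k] = k` for the label `m = 0`, which stands for `m = ∞`. -/
noncomputable def quantumInt (m k : ℕ) : ℝ :=
  (Polynomial.Chebyshev.S ℝ (k - 1)).eval (bondWeight m)

@[simp]
theorem quantumInt_zero (m : ℕ) : quantumInt m 0 = 0 := by simp [quantumInt]

@[simp]
theorem quantumInt_one (m : ℕ) : quantumInt m 1 = 1 := by simp [quantumInt]

theorem quantumInt_add_two (m k : ℕ) :
    quantumInt m (k + 2) = bondWeight m * quantumInt m (k + 1) - quantumInt m k := by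
  have hS := Polynomial.Chebyshev.S_add_two ℝ ((k : ℤ) - 1)
  rw [show (k : ℤ) - 1 + 2 = ((k + 2 : ℕ) : ℤ) - 1 by push_cast; ring,
    show (k : ℤ) - 1 + 1 = ((k + 1 : ℕ) : ℤ) - 1 by push_cast; ring] at hS
  rw [quantumInt, hS, Polynomial.eval_sub, Polynomial.eval_mul, Polynomial.eval_X, quantumInt,
    quantumInt]

theorem quantumInt_two (m : ℕ) : quantumInt m 2 = bondWeight m := by
  rw [quantumInt_add_two, quantumInt_one, quantumInt_zero, mul_one, sub_zero]

theorem quantumInt_mul_sin (m k : ℕ) :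
    quantumInt m k * Real.sin (Real.pi / m) = Real.sin (k * (Real.pi / m)) := by
  have hS := Polynomial.Chebyshev.S_two_mul_real_cos (Real.pi / m) ((k : ℤ) - 1)
  rw [quantumInt, bondWeight, hS]
  push_cast
  rw [sub_add_cancel]

theorem sin_pi_div_pos {m : ℕ} (hm : 2 ≤ m) : 0 < Real.sin (Real.pi / m) := by
  have hm' : (2 : ℝ) ≤ m := by exact_mod_cast hm
  exact Real.sin_pos_of_pos_of_lt_pi (by positivity) (div_lt_self Real.pi_pos (by linarith))

theorem quantumInt_self {m : ℕ} (hm : 2 ≤ m) : quantumInt m m = 0 := by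
  have h := quantumInt_mul_sin m m
  rw [mul_div_cancel₀ _ (by positivity), Real.sin_pi] at h
  exact (mul_eq_zero.1 h).resolve_right (sin_pi_div_pos hm).ne'

theorem quantumInt_nonneg {m k : ℕ} (hm : m ≠ 1) (hk : m = 0 ∨ k ≤ m) : 0 ≤ quantumInt m k := by
  obtain rfl | hm0 := eq_or_ne m 0
  · simp [quantumInt, bondWeight]
  have hm2 : 2 ≤ m := by omega
  have hkm : (k : ℝ) ≤ m := by exact_mod_cast hk.resolve_left hm0
  refine nonneg_of_mul_nonneg_left ?_ (sin_pi_div_pos hm2)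
  rw [quantumInt_mul_sin]
  refine Real.sin_nonneg_of_nonneg_of_le_pi (by positivity) ?_
  calc k * (Real.pi / m) ≤ m * (Real.pi / m) := by gcongr
    _ = Real.pi := mul_div_cancel₀ _ (by positivity)

theorem bondWeight_nonneg {m : ℕ} (hm : m ≠ 1) : 0 ≤ bondWeight m := by
  rw [← quantumInt_two]
  exact quantumInt_nonneg hm (by omega)

/-- Along the interlaced sequence `F 0, G 1, F 2, G 3, …` the Chebyshev recursion has the solution
`[k + 1] x + [k] y`. -/
theorem exists_quantumInt_combination {E : Type*} [AddCommGroup E] [Module ℝ E] (m : ℕ)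
    {K : Set E} {F G : ℕ → E} (hF₀ : F 0 ∈ K) (hG₀ : G 0 ∈ K)
    (hF₁ : F 1 = F 0 + bondWeight m • G 0) (hG₁ : G 1 = G 0 + bondWeight m • F 0)
    (hF : ∀ k, F (k + 2) = bondWeight m • G (k + 1) - F k)
    (hG : ∀ k, G (k + 2) = bondWeight m • F (k + 1) - G k) (k : ℕ) :
    ∃ x ∈ K, ∃ y ∈ K, F k = quantumInt m (k + 1) • x + quantumInt m k • y ∧
      G (k + 1) = quantumInt m (k + 2) • x + quantumInt m (k + 1) • y := by
  induction k generalizing F G with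
  | zero =>
    refine ⟨F 0, hF₀, G 0, hG₀, by simp, ?_⟩
    rw [hG₁, quantumInt_add_two]
    simp [add_comm]
  | succ k ih =>
    obtain ⟨x, hx, y, hy, hGk, hFk⟩ := ih hG₀ hF₀ hG₁ hF₁ hG hF
    refine ⟨x, hx, y, hy, hFk, ?_⟩
    rw [hG, hFk, hGk, quantumInt_add_two m (k + 1), quantumInt_add_two m k]
    module

end BondWeight

section AltWord

variable {B : Type*}

/-- The alternating word `a b a …` of length `k`. Unlike `CoxeterSystem.alternatingWord`, it is
determined by its first letter. -/
def altWord (a b : B) : ℕ → List B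
  | 0 => []
  | k + 1 => a :: altWord b a k

theorem altWord_succ (a b : B) (k : ℕ) : altWord a b (k + 1) = a :: altWord b a k := rfl

@[simp]
theorem length_altWord (a b : B) (k : ℕ) : (altWord a b k).length = k := by
  induction k generalizing a b with
  | zero => rfl
  | succ k ih => simp [altWord, ih]

theorem altWord_add (a b : B) (k j : ℕ) : ∃ l, altWord a b (k + j) = altWord a b k ++ l := by
  induction k generalizing a b with
  | zero => exact ⟨_, rfl⟩
  | succ k ih =>
    obtain ⟨l, hl⟩ := ih b a
    exact ⟨l, by rw [Nat.succ_add, altWord_succ, hl]; rfl⟩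

theorem altWord_two_mul_add_one (a b : B) (i : ℕ) :
    altWord a b (2 * i + 1) = altWord a b (2 * i) ++ [a] := by
  induction i with
  | zero => rfl
  | succ i ih => exact congrArg (fun l => a :: b :: l) ih

theorem altWord_two_mul_add_two (a b : B) (i : ℕ) :
    altWord a b (2 * i + 2) = altWord a b (2 * i + 1) ++ [b] :=
  congrArg (a :: ·) (altWord_two_mul_add_one b a i)

theorem reverse_altWord (a b : B) (k : ℕ) :
    (altWord a b k).reverse = CoxeterSystem.alternatingWord b a k := by
  induction k generalizing a b with
  | zero => rfl
  | succ k ih => rw [altWord_succ, List.reverse_cons, ih, CoxeterSystem.alternatingWord_succ,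
      List.concat_eq_append]

end AltWord

section ReducedWords

variable {B W : Type*} [Group W] {M : CoxeterMatrix B} (cs : CoxeterSystem M W)

theorem wordProd_altWord_swap (a b : B) :
    cs.wordProd (altWord a b (M a b)) = cs.wordProd (altWord b a (M a b)) := by
  have h := cs.wordProd_braidWord_eq b a
  rw [CoxeterSystem.braidWord, CoxeterSystem.braidWord, M.symmetric b a, ← reverse_altWord,
    ← reverse_altWord] at h
  simpa only [CoxeterSystem.wordProd_reverse, inv_inj] using h

theorem wordProd_altWord_append_swap (a b : B) (l : List B) :
    cs.wordProd (altWord a b (M a b) ++ l) = cs.wordProd (altWord b a (M a b) ++ l) := by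
  rw [cs.wordProd_append, cs.wordProd_append, wordProd_altWord_swap]

variable {cs}

theorem isReduced_altWord_append_swap {a b : B} {l : List B}
    (h : cs.IsReduced (altWord a b (M a b) ++ l)) :
    cs.IsReduced (altWord b a (M a b) ++ l) := by
  rw [CoxeterSystem.IsReduced, ← wordProd_altWord_append_swap, h.eq]
  simp

theorem isLeftDescent_of_isReduced_cons {a : B} {l : List B} (h : cs.IsReduced (a :: l)) :
    cs.IsLeftDescent (cs.wordProd (a :: l)) a := by
  rw [CoxeterSystem.IsLeftDescent, h.eq, cs.wordProd_cons, cs.simple_mul_simple_cancel_left]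
  exact Nat.lt_succ_of_le (cs.length_wordProd_le l)

variable (cs) in
/-- `w` has a reduced word that begins with `l`. -/
def IsReducedPrefix (l : List B) (w : W) : Prop :=
  ∃ r, cs.IsReduced (l ++ r) ∧ cs.wordProd (l ++ r) = w

theorem isReducedPrefix_of_eq_wordProd_mul {l : List B} {w u : W} (hw : w = cs.wordProd l * u)
    (hlen : cs.length w = l.length + cs.length u) : IsReducedPrefix cs l w := by
  obtain ⟨r, hr, rfl⟩ := cs.exists_isReduced u
  rw [← cs.wordProd_append] at hw
  refine ⟨r, ?_, hw.symm⟩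
  rw [CoxeterSystem.IsReduced, ← hw, hlen, hr.eq, List.length_append]

theorem isReducedPrefix_singleton_of_isLeftDescent {w : W} {s : B} (hs : cs.IsLeftDescent w s) :
    IsReducedPrefix cs [s] w := by
  refine isReducedPrefix_of_eq_wordProd_mul (u := cs.simple s * w) (by simp) ?_
  rw [← cs.isLeftDescent_iff.1 hs, add_comm, List.length_singleton]

theorem exists_isReduced_append_singleton_of_isRightDescent {w : W} {s : B}
    (hs : cs.IsRightDescent w s) : ∃ l, cs.IsReduced (l ++ [s]) ∧ cs.wordProd (l ++ [s]) = w := by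
  obtain ⟨r, hr, hw⟩ :=
    isReducedPrefix_singleton_of_isLeftDescent (cs.isLeftDescent_inv_iff.2 hs)
  have hrev : (([s] ++ r).reverse : List B) = r.reverse ++ [s] := by simp
  refine ⟨r.reverse, hrev ▸ hr.reverse, ?_⟩
  rw [← hrev, cs.wordProd_reverse, hw, inv_inv]

theorem IsReducedPrefix.of_append {l l' : List B} {w : W} (h : IsReducedPrefix cs (l ++ l') w) :
    IsReducedPrefix cs l w := by
  obtain ⟨r, hr, hw⟩ := h
  rw [List.append_assoc] at hr hw
  exact ⟨_, hr, hw⟩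

theorem IsReducedPrefix.altWord_of_le {a b : B} {w : W} {j k : ℕ} (hjk : j ≤ k)
    (h : IsReducedPrefix cs (altWord a b k) w) : IsReducedPrefix cs (altWord a b j) w := by
  obtain ⟨i, rfl⟩ := Nat.exists_eq_add_of_le hjk
  obtain ⟨l, hl⟩ := altWord_add a b j i
  rw [hl] at h
  exact h.of_append

theorem isLeftDescent_of_isReducedPrefix_altWord {a b : B} {w : W} {k : ℕ} (h₀ : M a b ≠ 0)
    (hk : M a b ≤ k) (h : IsReducedPrefix cs (altWord a b k) w) : cs.IsLeftDescent w b := by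
  obtain ⟨r, hr, rfl⟩ := h.altWord_of_le hk
  have hswap := isReduced_altWord_append_swap hr
  rw [wordProd_altWord_append_swap]
  obtain ⟨m, hm⟩ := Nat.exists_eq_succ_of_ne_zero h₀
  rw [hm, altWord_succ, List.cons_append] at hswap ⊢
  exact isLeftDescent_of_isReduced_cons hswap

variable (cs) in
theorem exists_altWord_mul_of_isLeftDescent {w : W} {a : B} (b : B) (ha : cs.IsLeftDescent w a) :
    ∃ k u, w = cs.wordProd (altWord a b (k + 1)) * u ∧ cs.length w = k + 1 + cs.length u ∧
      ¬ cs.IsLeftDescent u a ∧ ¬ cs.IsLeftDescent u b := by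
  induction hn : cs.length w generalizing w a b with
  | zero => exact absurd ha (by simp [CoxeterSystem.IsLeftDescent, hn])
  | succ n ih =>
    have hlen := cs.isLeftDescent_iff.1 ha
    have hw : w = cs.simple a * (cs.simple a * w) := by simp
    by_cases hb : cs.IsLeftDescent (cs.simple a * w) b
    · obtain ⟨k, u, hu, hk, hub, hua⟩ := ih a hb (by omega)
      refine ⟨k + 1, u, ?_, by omega, hua, hub⟩
      rw [hw, hu, altWord_succ a b, cs.wordProd_cons, mul_assoc]
    · refine ⟨0, cs.simple a * w, by simp [altWord], by omega, ?_, hb⟩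
      exact cs.isLeftDescent_iff_not_isLeftDescent_mul.1 ha

end ReducedWords

section RootSystem

variable {B W V : Type*} [Group W] {M : CoxeterMatrix B} [AddCommGroup V] [Module ℝ V]

/-- `ρ` represents the Coxeter system `cs` by reflections with roots `α` and coroots `αv`. The
factor `c` makes the two pairings of `s` and `t` symmetric; it leaves room for Cartan matrices that
are not symmetrizable. -/
structure IsReflectionRep (cs : CoxeterSystem M W) (α : B → V) (αv : B → Module.Dual ℝ V)
    (ρ : W →* (V ≃ₗ[ℝ] V)) : Prop where
  coroot_root : ∀ s, αv s (α s) = 2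
  simple_apply : ∀ s v, ρ (cs.simple s) v = v - αv s v • α s
  exists_scale : ∀ s t, s ≠ t → ∃ c : ℝ, 0 < c ∧
    c * αv t (α s) = -bondWeight (M s t) ∧ αv s (α t) = c * -bondWeight (M s t)

namespace IsReflectionRep

variable {cs : CoxeterSystem M W} {α : B → V} {αv : B → Module.Dual ℝ V} {ρ : W →* (V ≃ₗ[ℝ] V)}

theorem simple_mul_apply (h : IsReflectionRep cs α αv ρ) (s : B) (w : W) (v : V) :
    ρ (cs.simple s * w) v = ρ w v - αv s (ρ w v) • α s := by
  rw [map_mul, LinearEquiv.mul_apply, h.simple_apply]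

theorem coroot_simple_mul (h : IsReflectionRep cs α αv ρ) (s t : B) (w : W) (v : V) :
    αv s (ρ (cs.simple t * w) v) = αv s (ρ w v) - αv t (ρ w v) * αv s (α t) := by
  rw [h.simple_mul_apply, map_sub, map_smul, smul_eq_mul]

theorem coroot_simple_mul_self (h : IsReflectionRep cs α αv ρ) (s : B) (w : W) (v : V) :
    αv s (ρ (cs.simple s * w) v) = -αv s (ρ w v) := by
  rw [h.coroot_simple_mul, h.coroot_root]
  ring

theorem coroot_altWord_nonneg (h : IsReflectionRep cs α αv ρ) {s t : B} (hst : s ≠ t) {u : W}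
    {v : V} (hs : 0 ≤ αv s (ρ u v)) (ht : 0 ≤ αv t (ρ u v)) {k : ℕ} (hk : M s t = 0 ∨ k < M s t) :
    0 ≤ αv s (ρ (cs.wordProd (altWord t s k) * u) v) := by
  obtain ⟨c, hc, hts, hst'⟩ := h.exists_scale s t hst
  let F k := αv s (ρ (cs.wordProd (altWord t s k) * u) v)
  let G k := c * αv t (ρ (cs.wordProd (altWord s t k) * u) v)
  have hF (k) : F (k + 1) = αv s (ρ (cs.wordProd (altWord s t k) * u) v) +
      bondWeight (M s t) * G k := by
    simp only [F, G, altWord_succ, cs.wordProd_cons, mul_assoc, h.coroot_simple_mul, hst']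
    ring
  have hG (k) : G (k + 1) = c * αv t (ρ (cs.wordProd (altWord t s k) * u) v) +
      bondWeight (M s t) * F k := by
    simp only [F, G, altWord_succ, cs.wordProd_cons, mul_assoc, h.coroot_simple_mul, mul_sub]
    linear_combination (-αv s (ρ (cs.wordProd (altWord t s k) * u) v)) * hts
  obtain ⟨x, hx, y, hy, hFk, -⟩ := exists_quantumInt_combination (M s t) (K := Set.Ici (0 : ℝ))
    (F := F) (G := G) (by simpa [F, altWord] using hs)
    (by simpa [G, altWord] using mul_nonneg hc.le ht) (hF 0) (hG 0)
    (fun k => by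
      rw [hF, altWord_succ, cs.wordProd_cons, mul_assoc, h.coroot_simple_mul_self, smul_eq_mul]
      ring)
    (fun k => by
      rw [hG, altWord_succ, cs.wordProd_cons, mul_assoc, h.coroot_simple_mul_self, smul_eq_mul]
      ring) k
  have hM : M s t ≠ 1 := M.off_diagonal s t hst
  change 0 ≤ F k
  rw [hFk]
  exact add_nonneg (mul_nonneg (quantumInt_nonneg hM (by omega)) hx)
    (mul_nonneg (quantumInt_nonneg hM (by omega)) hy)

theorem coroot_nonneg_of_not_isLeftDescent (h : IsReflectionRep cs α αv ρ) {v : V}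
    (hv : ∀ s, 0 ≤ αv s v) {w : W} {s : B} (hs : ¬ cs.IsLeftDescent w s) : 0 ≤ αv s (ρ w v) := by
  induction hn : cs.length w using Nat.strong_induction_on generalizing w s with
  | _ n ih =>
  obtain rfl | hw := eq_or_ne w 1
  · simpa using hv s
  obtain ⟨t, ht⟩ := cs.exists_leftDescent_of_ne_one hw
  have hts : t ≠ s := by
    rintro rfl
    exact hs ht
  obtain ⟨k, u, rfl, hlen, hut, hus⟩ := exists_altWord_mul_of_isLeftDescent cs s ht
  refine h.coroot_altWord_nonneg hts.symm (ih _ (by omega) hus rfl) (ih _ (by omega) hut rfl) ?_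
  by_contra! hk
  rw [M.symmetric s t] at hk
  exact hs (isLeftDescent_of_isReducedPrefix_altWord hk.1 hk.2
    (isReducedPrefix_of_eq_wordProd_mul rfl (by simpa using hlen)))

theorem coroot_nonpos_of_isLeftDescent (h : IsReflectionRep cs α αv ρ) {v : V}
    (hv : ∀ s, 0 ≤ αv s v) {w : W} {s : B} (hs : cs.IsLeftDescent w s) : αv s (ρ w v) ≤ 0 := by
  have hle := h.coroot_nonneg_of_not_isLeftDescent hv
    (cs.isLeftDescent_iff_not_isLeftDescent_mul.1 hs)
  rwa [h.coroot_simple_mul_self, neg_nonneg] at hle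

theorem apply_eq_of_dominant (h : IsReflectionRep cs α αv ρ) {v : V} (hv : ∀ s, 0 ≤ αv s v)
    {w : W} (hw : ∀ s, 0 ≤ αv s (ρ w v)) : ρ w v = v := by
  induction hn : cs.length w generalizing w with
  | zero => simp [cs.length_eq_zero_iff.1 hn]
  | succ n ih =>
    have hw₁ : w ≠ 1 := by
      rintro rfl
      simp at hn
    obtain ⟨s, hs⟩ := cs.exists_leftDescent_of_ne_one hw₁
    have hzero : αv s (ρ w v) = 0 := le_antisymm (h.coroot_nonpos_of_isLeftDescent hv hs) (hw s)
    have heq : ρ (cs.simple s * w) v = ρ w v := by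
      rw [h.simple_mul_apply, hzero, zero_smul, sub_zero]
    have hlen := cs.isLeftDescent_iff.1 hs
    rw [← heq, ih (fun t => by rw [heq]; exact hw t) (by omega)]

end IsReflectionRep

end RootSystem

section GeometricRep

theorem bondWeight_one : bondWeight 1 = -2 := by simp [bondWeight]

theorem bondWeight_two : bondWeight 2 = 0 := by simp [bondWeight]

theorem chebyshev_S_eval_two_mul_cos_eq_zero {θ : ℝ} (hθ : Real.sin (2 * θ) ≠ 0) {c : ℕ}
    (hc : 2 * c * θ = Real.pi) :
    (Polynomial.Chebyshev.S ℝ (c - 1)).eval (2 * Real.cos (2 * θ)) = 0 := by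
  have h := Polynomial.Chebyshev.S_two_mul_real_cos (2 * θ) ((c : ℤ) - 1)
  rw [show (((c : ℤ) - 1 : ℤ) + 1 : ℝ) * (2 * θ) = Real.pi by push_cast; linarith,
    Real.sin_pi] at h
  exact (mul_eq_zero.1 h).resolve_right hθ

theorem chebyshev_S_eval_two_mul_cos_add_eq_zero {θ : ℝ} (hθ : Real.sin (2 * θ) ≠ 0) {c : ℕ}
    (hc : (2 * c + 1) * θ = Real.pi) :
    (Polynomial.Chebyshev.S ℝ c).eval (2 * Real.cos (2 * θ)) +
      (Polynomial.Chebyshev.S ℝ (c - 1)).eval (2 * Real.cos (2 * θ)) = 0 := by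
  have h₁ := Polynomial.Chebyshev.S_two_mul_real_cos (2 * θ) (c : ℤ)
  have h₂ := Polynomial.Chebyshev.S_two_mul_real_cos (2 * θ) ((c : ℤ) - 1)
  rw [show (((c : ℤ) : ℝ) + 1) * (2 * θ) = θ + Real.pi by push_cast; linarith,
    Real.sin_add_pi] at h₁
  rw [show (((c : ℤ) - 1 : ℤ) + 1 : ℝ) * (2 * θ) = Real.pi - θ by push_cast; linarith,
    Real.sin_pi_sub] at h₂
  refine (mul_eq_zero.1 (?_ : _ * Real.sin (2 * θ) = 0)).resolve_right hθ
  rw [add_mul, h₁, h₂, neg_add_cancel]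

theorem reflection_mul_reflection_pow_eq_one {V : Type*} [AddCommGroup V] [Module ℝ V] {x y : V}
    {f g : Module.Dual ℝ V} (hf : f x = 2) (hg : g y = 2) {m : ℕ} (hm : 2 ≤ m)
    (hfy : f y = -bondWeight m) (hgx : g x = -bondWeight m) :
    (Module.reflection hf * Module.reflection hg) ^ m = 1 := by
  ext z
  obtain rfl | hm₃ := hm.eq_or_lt
  · rw [bondWeight_two, neg_zero] at hfy hgx
    simp only [pow_two, LinearEquiv.mul_apply, Module.reflection_apply, map_sub, map_smul, hf, hg,
      hfy, hgx, LinearEquiv.coe_one, id]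
    module
  have hm₃' : (2 : ℝ) < m := by exact_mod_cast hm₃
  set θ := Real.pi / (m : ℝ) with hθ
  have hmθ : (m : ℝ) * θ = Real.pi := mul_div_cancel₀ _ (by positivity)
  have hθ₀ : 0 < θ := div_pos Real.pi_pos (by linarith)
  have hsin : Real.sin (2 * θ) ≠ 0 :=
    (Real.sin_pos_of_pos_of_lt_pi (by linarith) (by nlinarith)).ne'
  have ht : 2 * Real.cos (2 * θ) = f y * g x - 2 := by
    rw [hfy, hgx, bondWeight, ← hθ, Real.cos_two_mul]
    ring
  rw [Module.reflection_mul_reflection_pow_apply hf hg m z _ ht]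
  obtain ⟨c, rfl | rfl⟩ := m.even_or_odd'
  · have hS := chebyshev_S_eval_two_mul_cos_eq_zero hsin (c := c) (by exact_mod_cast hmθ)
    rw [show ((2 * c : ℕ) - 2 : ℤ) / 2 = c - 1 by omega,
      show ((2 * c : ℕ) - 1 : ℤ) / 2 = c - 1 by omega, hS]
    simp
  · have hS := chebyshev_S_eval_two_mul_cos_add_eq_zero hsin (c := c) (by exact_mod_cast hmθ)
    rw [show ((2 * c + 1 : ℕ) - 2 : ℤ) / 2 = c - 1 by omega,
      show ((2 * c + 1 : ℕ) - 1 : ℤ) / 2 = c by omega,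
      show ((2 * c + 1 : ℕ) - 3 : ℤ) / 2 = c - 1 by omega,
      show ((2 * c + 1 : ℕ) : ℤ) / 2 = c by omega, hS]
    simp

variable {B W : Type*} [Group W] {M : CoxeterMatrix B}

/-- The roots of the geometric representation of `M` on `B → ℝ`, whose coroots are the
coordinates. The diagonal needs no case of its own, because `-bondWeight 1 = 2`. -/
noncomputable def geometricRoot (M : CoxeterMatrix B) (s t : B) : ℝ := -bondWeight (M t s)

theorem geometricRoot_self (s : B) : geometricRoot M s s = 2 := by
  rw [geometricRoot, M.diagonal, bondWeight_one, neg_neg]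

theorem exists_isReflectionRep_geometricRoot (cs : CoxeterSystem M W) :
    ∃ ρ : W →* ((B → ℝ) ≃ₗ[ℝ] (B → ℝ)),
      IsReflectionRep cs (geometricRoot M) (fun s => LinearMap.proj s) ρ := by
  have hpair (s : B) : (LinearMap.proj s : Module.Dual ℝ (B → ℝ)) (geometricRoot M s) = 2 :=
    geometricRoot_self s
  have hlift : M.IsLiftable fun s => Module.reflection (hpair s) := by
    intro s t
    obtain rfl | hst := eq_or_ne s t
    · rw [M.diagonal, pow_one]
      ext1 v
      exact Module.involutive_reflection (hpair s) v
    obtain h₀ | h₀ := eq_or_ne (M s t) 0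
    · rw [h₀, pow_zero]
    have h₁ := M.off_diagonal s t hst
    refine reflection_mul_reflection_pow_eq_one (hpair s) (hpair t) (by omega) rfl ?_
    rw [LinearMap.proj_apply, geometricRoot, M.symmetric]
  refine ⟨cs.lift ⟨_, hlift⟩, hpair, fun s v => ?_, fun s t _ => ⟨1, one_pos, ?_, ?_⟩⟩
  · rw [cs.lift_apply_simple, Module.reflection_apply]
  · rw [one_mul, LinearMap.proj_apply, geometricRoot, M.symmetric]
  · rw [one_mul, LinearMap.proj_apply, geometricRoot]

end GeometricRep

section Matsumoto

variable {B W : Type*} [Group W] {M : CoxeterMatrix B} {cs : CoxeterSystem M W}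

/-- If the alternating word in `a` and `b` were too short for a braid relation, the coordinate form
of `b` along the orbit would be both nonnegative and nonpositive on dominant vectors. -/
theorem isReducedPrefix_altWord_of_isLeftDescent {w : W} {a b : B} (hab : a ≠ b)
    (ha : cs.IsLeftDescent w a) (hb : cs.IsLeftDescent w b) :
    M a b ≠ 0 ∧ IsReducedPrefix cs (altWord a b (M a b)) w := by
  obtain ⟨k, u, hw, hlen, hua, hub⟩ := exists_altWord_mul_of_isLeftDescent cs b ha
  by_cases hk : M b a = 0 ∨ k + 1 < M b a
  · obtain ⟨ρ, h⟩ := exists_isReflectionRep_geometricRoot cs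
    have hzero {v : B → ℝ} (hv : 0 ≤ v) : ρ w v b = 0 := by
      have hpos := h.coroot_altWord_nonneg hab.symm (h.coroot_nonneg_of_not_isLeftDescent hv hub)
        (h.coroot_nonneg_of_not_isLeftDescent hv hua) hk
      rw [← hw] at hpos
      exact le_antisymm (h.coroot_nonpos_of_isLeftDescent hv hb) hpos
    have hroot := congrFun (congrArg (ρ w) (posPart_sub_negPart
      (ρ w⁻¹ (geometricRoot M b)))) b
    rw [map_sub, Pi.sub_apply, hzero (posPart_nonneg _), hzero (negPart_nonneg _),
      ← LinearEquiv.mul_apply, ← map_mul, mul_inv_cancel, map_one, LinearEquiv.coe_one, id,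
      geometricRoot_self] at hroot
    norm_num at hroot
  · push Not at hk
    rw [M.symmetric b a] at hk
    exact ⟨hk.1, .altWord_of_le hk.2
      (isReducedPrefix_of_eq_wordProd_mul hw (by rw [hlen, length_altWord]))⟩

theorem simple_injective (cs : CoxeterSystem M W) : Function.Injective cs.simple := by
  intro a b hab
  by_contra! hne
  have ha : cs.IsLeftDescent (cs.simple a) a := by simp [CoxeterSystem.IsLeftDescent]
  have hb : cs.IsLeftDescent (cs.simple a) b := by simp [CoxeterSystem.IsLeftDescent, hab]
  obtain ⟨h₀, r, hr, hrw⟩ := isReducedPrefix_altWord_of_isLeftDescent hne ha hb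
  have hlen := hr.eq
  rw [hrw, cs.length_simple, List.length_append, length_altWord] at hlen
  have := M.off_diagonal a b hne
  omega

/-- Replacing a factor `a b a …` of length `M a b` in a word by `b a b …`. -/
inductive BraidStep (M : CoxeterMatrix B) : List B → List B → Prop
  | mk (l₁ l₂ : List B) {a b : B} (hab : a ≠ b) (h₀ : M a b ≠ 0) :
    BraidStep M (l₁ ++ altWord a b (M a b) ++ l₂) (l₁ ++ altWord b a (M a b) ++ l₂)

theorem BraidStep.cons (s : B) {l l' : List B} (h : BraidStep M l l') :
    BraidStep M (s :: l) (s :: l') := by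
  obtain ⟨l₁, l₂, hab, h₀⟩ := h
  exact .mk (s :: l₁) l₂ hab h₀

/-- Matsumoto's theorem. -/
theorem reflTransGen_braidStep_of_isReduced {l m : List B} (hl : cs.IsReduced l)
    (hm : cs.IsReduced m) (hlm : cs.wordProd l = cs.wordProd m) :
    Relation.ReflTransGen (BraidStep M) l m := by
  induction hn : l.length generalizing l m with
  | zero =>
    have hm₀ : m.length = 0 := by rw [← hm.eq, ← hlm, hl.eq, hn]
    rw [List.length_eq_zero_iff.1 hn, List.length_eq_zero_iff.1 hm₀]
  | succ n ih =>
    have hcons {s : B} {l m : List B} (hn : l.length = n) (hl : cs.IsReduced (s :: l))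
        (hm : cs.IsReduced (s :: m)) (hlm : cs.wordProd (s :: l) = cs.wordProd (s :: m)) :
        Relation.ReflTransGen (BraidStep M) (s :: l) (s :: m) := by
      rw [cs.wordProd_cons, cs.wordProd_cons] at hlm
      exact (ih (hl.drop 1) (hm.drop 1) (mul_left_cancel hlm) hn).lift (s :: ·)
        fun _ _ => BraidStep.cons s
    have hmn : m.length = n + 1 := by rw [← hm.eq, ← hlm, hl.eq, hn]
    obtain ⟨a, l, rfl⟩ := List.exists_cons_of_length_eq_add_one hn
    obtain ⟨b, m, rfl⟩ := List.exists_cons_of_length_eq_add_one hmn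
    obtain rfl | hab := eq_or_ne a b
    · exact hcons (by simpa using hn) hl hm hlm
    have ha := isLeftDescent_of_isReduced_cons hl
    have hb := isLeftDescent_of_isReduced_cons hm
    rw [← hlm] at hb
    obtain ⟨h₀, r, hr, hrl⟩ := isReducedPrefix_altWord_of_isLeftDescent hab ha hb
    have hr' := isReduced_altWord_append_swap hr
    have hrm := (wordProd_altWord_append_swap cs a b r).symm.trans (hrl.trans hlm)
    have hstep := BraidStep.mk [] r hab h₀
    have hrn : (altWord a b (M a b) ++ r).length = n + 1 := by rw [← hr.eq, hrl, hl.eq, hn]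
    obtain ⟨k, hk⟩ := Nat.exists_eq_succ_of_ne_zero h₀
    rw [hk] at hr hr' hrl hrm hstep hrn
    refine (hcons (by simpa using hn) hl hr hrl.symm).trans (.head hstep
      (hcons (l := altWord a b k ++ r) ?_ hr' hm hrm))
    rw [List.length_append, length_altWord] at hrn ⊢
    omega

end Matsumoto

section RunningInfimum

open Set

/-- The infimum of `f` on `[a, b]`, the building block of the Pitman transforms. -/
noncomputable def infIcc (f : ℝ → ℝ) (a b : ℝ) : ℝ := sInf (f '' Icc a b)

variable {f g : ℝ → ℝ} {a b c x : ℝ}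

theorem le_infIcc_iff (hab : a ≤ b) (hf : BddBelow (f '' Icc a b)) :
    x ≤ infIcc f a b ↔ ∀ u ∈ Icc a b, x ≤ f u := by
  rw [infIcc, le_csInf_iff hf ((nonempty_Icc.2 hab).image f), forall_mem_image]

theorem infIcc_le {u : ℝ} (hf : BddBelow (f '' Icc a b)) (hu : u ∈ Icc a b) : infIcc f a b ≤ f u :=
  csInf_le hf (mem_image_of_mem f hu)

theorem infIcc_congr (h : EqOn f g (Icc a b)) : infIcc f a b = infIcc g a b := by
  rw [infIcc, h.image_eq, infIcc]

theorem infIcc_self (f : ℝ → ℝ) (a : ℝ) : infIcc f a a = f a := by simp [infIcc]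

theorem infIcc_const (hab : a ≤ b) (x : ℝ) : infIcc (fun _ => x) a b = x := by
  rw [infIcc, (nonempty_Icc.2 hab).image_const, csInf_singleton]

theorem infIcc_le_infIcc {d e : ℝ} (hf : BddBelow (f '' Icc a b)) (hde : d ≤ e)
    (h : Icc d e ⊆ Icc a b) : infIcc f a b ≤ infIcc f d e :=
  csInf_le_csInf hf ((nonempty_Icc.2 hde).image f) (image_mono h)

theorem infIcc_eq_min (hf : BddBelow (f '' Icc a c)) (hab : a ≤ b) (hbc : b ≤ c) :
    infIcc f a c = min (infIcc f a b) (infIcc f b c) := by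
  rw [infIcc, ← Icc_union_Icc_eq_Icc hab hbc, image_union] at *
  exact csInf_union (hf.mono subset_union_left) ((nonempty_Icc.2 hab).image f)
    (hf.mono subset_union_right) ((nonempty_Icc.2 hbc).image f)

theorem infIcc_add_const (hab : a ≤ b) (hf : BddBelow (f '' Icc a b)) (x : ℝ) :
    infIcc (fun u => f u + x) a b = infIcc f a b + x := by
  have hfx := (OrderIso.addRight x).monotone.map_bddBelow hf
  rw [image_image] at hfx
  refine eq_of_forall_le_iff fun y => ?_
  rw [le_infIcc_iff (f := fun u => f u + x) hab hfx, ← sub_le_iff_le_add, le_infIcc_iff hab hf]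
  simp only [sub_le_iff_le_add]

theorem infIcc_const_mul (hx : 0 ≤ x) (f : ℝ → ℝ) (a b : ℝ) :
    infIcc (fun u => x * f u) a b = x * infIcc f a b := by
  rw [infIcc, infIcc, ← smul_eq_mul, ← Real.sInf_smul_of_nonneg hx, ← image_smul, image_image]
  rfl

theorem infIcc_comp_const_sub (f : ℝ → ℝ) (c a b : ℝ) :
    infIcc (fun u => f (c - u)) a b = infIcc f (c - b) (c - a) := by
  rw [infIcc, infIcc, ← image_const_sub_Icc, image_image]

theorem continuousOn_infIcc (hf : ContinuousOn f (Icc a b)) :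
    ContinuousOn (infIcc f a) (Icc a b) := by
  intro t₀ ht₀
  have hab : a ≤ b := ht₀.1.trans ht₀.2
  set F := IccExtend hab ((Icc a b).domRestrict f)
  have hF : Continuous F := (continuousOn_iff_continuous_domRestrict.1 hf).Icc_extend'
  have hcont : Continuous fun t : ℝ =>
      sInf ((fun θ : ℝ => F (AffineMap.lineMap a t θ)) '' Icc 0 1) := by
    refine isCompact_Icc.continuous_sInf (f := fun t θ => F (AffineMap.lineMap a t θ)) ?_
    simp only [Function.HasUncurry.uncurry, id, AffineMap.lineMap_apply]
    fun_prop
  refine hcont.continuousOn.congr (fun t ht => ?_) t₀ ht₀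
  have himage := segment_eq_image_lineMap ℝ a t
  rw [segment_eq_Icc ht.1] at himage
  have hext : EqOn f F (Icc a t) := fun u hu =>
    (IccExtend_of_mem hab ((Icc a b).domRestrict f) ⟨hu.1, hu.2.trans ht.2⟩).symm
  rw [infIcc_congr hext, infIcc, himage, image_image]

theorem bddBelow_image_add {s : Set ℝ} (hf : BddBelow (f '' s)) (hg : BddBelow (g '' s)) :
    BddBelow ((fun u => f u + g u) '' s) := by
  obtain ⟨x, hx⟩ := hf
  obtain ⟨y, hy⟩ := hg
  refine ⟨x + y, forall_mem_image.2 fun u hu => ?_⟩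
  exact add_le_add (hx (mem_image_of_mem f hu)) (hy (mem_image_of_mem g hu))

theorem bddBelow_image_infIcc {l r : ℝ → ℝ} (hf : BddBelow (f '' Icc a b))
    (hlr : ∀ u ∈ Icc a b, l u ≤ r u) (h : ∀ u ∈ Icc a b, Icc (l u) (r u) ⊆ Icc a b) :
    BddBelow ((fun u => infIcc f (l u) (r u)) '' Icc a b) :=
  ⟨infIcc f a b, forall_mem_image.2 fun u hu => infIcc_le_infIcc hf (hlr u hu) (h u hu)⟩

/-- Both sides are the infimum of `f u + g v` over `a ≤ v ≤ u ≤ b`. -/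
theorem infIcc_add_infIcc_comm (hab : a ≤ b) (hf : BddBelow (f '' Icc a b))
    (hg : BddBelow (g '' Icc a b)) :
    infIcc (fun u => f u + infIcc g a u) a b = infIcc (fun v => g v + infIcc f v b) a b := by
  refine eq_of_forall_le_iff fun x => ?_
  rw [le_infIcc_iff hab (bddBelow_image_add hf (bddBelow_image_infIcc hg (fun u hu => hu.1)
      fun u hu => Icc_subset_Icc_right hu.2)),
    le_infIcc_iff hab (bddBelow_image_add hg (bddBelow_image_infIcc hf (fun v hv => hv.2)
      fun v hv => Icc_subset_Icc_left hv.1))]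
  have hl : ∀ u ∈ Icc a b, x ≤ f u + infIcc g a u ↔ ∀ v ∈ Icc a u, x ≤ f u + g v := fun u hu => by
    simp only [← sub_le_iff_le_add']
    exact le_infIcc_iff hu.1 (hg.mono (image_mono (Icc_subset_Icc_right hu.2)))
  have hr : ∀ v ∈ Icc a b, x ≤ g v + infIcc f v b ↔ ∀ u ∈ Icc v b, x ≤ g v + f u := fun v hv => by
    simp only [← sub_le_iff_le_add']
    exact le_infIcc_iff hv.2 (hf.mono (image_mono (Icc_subset_Icc_left hv.1)))
  constructor
  · intro h
    refine fun v hv => (hr v hv).2 fun u hu => ?_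
    rw [add_comm]
    exact (hl u ⟨hv.1.trans hu.1, hu.2⟩).1 (h u ⟨hv.1.trans hu.1, hu.2⟩) v ⟨hv.1, hu.1⟩
  · intro h
    refine fun u hu => (hl u hu).2 fun v hv => ?_
    rw [add_comm]
    exact (hr v ⟨hv.1, hv.2.trans hu.2⟩).1 (h v ⟨hv.1, hv.2.trans hu.2⟩) u ⟨hv.2, hu.2⟩

variable {γ : ℝ → ℝ} {v s : ℝ}

theorem exists_eq_infIcc_of_lt (hγ : ContinuousOn γ (Icc a s)) (hv : v ∈ Icc a s)
    (hlt : infIcc γ v s < infIcc γ a v) :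
    ∃ u ∈ Icc v s, γ u = infIcc γ a v ∧ infIcc γ a u = infIcc γ a v := by
  have hbdd {u : ℝ} (hu : u ≤ s) : BddBelow (γ '' Icc a u) :=
    isCompact_Icc.bddBelow_image (hγ.mono (Icc_subset_Icc_right hu))
  have hvs : ContinuousOn γ (Icc v s) := hγ.mono (Icc_subset_Icc_left hv.1)
  have hle : infIcc γ a v ≤ γ v := infIcc_le (hbdd hv.2) ⟨hv.1, le_rfl⟩
  have hivt {y : ℝ} (hy : y ∈ Icc v s) (hlt : γ y ≤ infIcc γ a v) :
      ∃ z ∈ Icc v y, γ z = infIcc γ a v :=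
    intermediate_value_Icc' hy.1 (hvs.mono (Icc_subset_Icc_right hy.2)) ⟨hlt, hle⟩
  obtain ⟨x, hx, hxinf⟩ := isCompact_Icc.exists_sInf_image_eq (nonempty_Icc.2 hv.2) hvs
  obtain ⟨z, hz, hγz⟩ := hivt hx (hxinf.symm.trans_le hlt.le)
  have hcompact : IsCompact (Icc v s ∩ γ ⁻¹' {infIcc γ a v}) :=
    isCompact_Icc.of_isClosed_subset
      (hvs.preimage_isClosed_of_isClosed isClosed_Icc isClosed_singleton) inter_subset_left
  obtain ⟨u, ⟨hu, hγu⟩, hleast⟩ := hcompact.exists_isLeast ⟨z, ⟨hz.1, hz.2.trans hx.2⟩, hγz⟩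
  refine ⟨u, hu, hγu, ?_⟩
  rw [infIcc_eq_min (hbdd hu.2) hv.1 hu.1, min_eq_left_iff, le_infIcc_iff hu.1
    ((hbdd hu.2).mono (image_mono (Icc_subset_Icc_left hv.1)))]
  intro y hy
  by_contra! hlt
  obtain ⟨z, hz, hγz⟩ := hivt ⟨hy.1, hy.2.trans hu.2⟩ hlt.le
  have huz := hleast ⟨⟨hz.1, hz.2.trans (hy.2.trans hu.2)⟩, hγz⟩
  rw [← le_antisymm hz.2 (hy.2.trans huz)] at hlt
  exact hlt.ne hγz

theorem infIcc_sub_two_mul_infIcc (hγ : ContinuousOn γ (Icc a s)) (hv : v ∈ Icc a s) :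
    infIcc (fun u => γ u - 2 * infIcc γ a u) v s =
      infIcc γ v s - infIcc γ a v - infIcc γ a s := by
  have hbdd : BddBelow (γ '' Icc a s) := isCompact_Icc.bddBelow_image hγ
  have hbdd' {u : ℝ} (hu : u ≤ s) : BddBelow (γ '' Icc a u) :=
    hbdd.mono (image_mono (Icc_subset_Icc_right hu))
  have hmin {u : ℝ} (hu : u ∈ Icc v s) : infIcc γ a u = min (infIcc γ a v) (infIcc γ v u) :=
    infIcc_eq_min (hbdd' hu.2) hv.1 hu.1
  rw [hmin ⟨hv.2, le_rfl⟩]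
  obtain hle | hlt := le_or_gt (infIcc γ a v) (infIcc γ v s)
  · have hvs : BddBelow (γ '' Icc v s) := hbdd.mono (image_mono (Icc_subset_Icc_left hv.1))
    have hconst : EqOn (fun u => γ u - 2 * infIcc γ a u) (fun u => γ u + -2 * infIcc γ a v)
        (Icc v s) := fun u hu => by
      have hvu := hle.trans (infIcc_le_infIcc hvs hu.1 (Icc_subset_Icc_right hu.2))
      simp only [hmin hu, min_eq_left hvu]
      ring
    rw [infIcc_congr hconst, infIcc_add_const hv.2 hvs, min_eq_left hle]
    ring
  · obtain ⟨u, hu, hγu, hinf⟩ := exists_eq_infIcc_of_lt hγ hv hlt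
    have hlower : ∀ u ∈ Icc v s, -infIcc γ a v ≤ γ u - 2 * infIcc γ a u := fun u hu => by
      have h₁ := infIcc_le (hbdd' hu.2) ⟨hv.1.trans hu.1, le_rfl⟩
      have h₂ := infIcc_le_infIcc (hbdd' hu.2) hv.1 (Icc_subset_Icc_right hu.1)
      linarith
    have hb : BddBelow ((fun u => γ u - 2 * infIcc γ a u) '' Icc v s) :=
      ⟨_, forall_mem_image.2 hlower⟩
    have hupper := infIcc_le hb hu
    have hlow := (le_infIcc_iff hv.2 hb).2 hlower
    simp only [hγu, hinf] at hupper
    rw [min_eq_right hlt.le]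
    linarith

theorem infIcc_sub_two_mul_infIcc_right (hγ : ContinuousOn γ (Icc a s)) (hv : v ∈ Icc a s) :
    infIcc (fun u => γ u - 2 * infIcc γ u s) a v =
      infIcc γ a v - infIcc γ v s - infIcc γ a s := by
  have hrev : ContinuousOn (fun u => γ (a + s - u)) (Icc a s) :=
    hγ.comp (by fun_prop) fun u hu => ⟨by linarith [hu.2], by linarith [hu.1]⟩
  have h := infIcc_sub_two_mul_infIcc (v := a + s - v) hrev
    ⟨by linarith [hv.2], by linarith [hv.1]⟩
  simp only [infIcc_comp_const_sub γ, add_sub_cancel_right, add_sub_cancel_left,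
    sub_sub_cancel] at h
  rw [← h]
  have := infIcc_comp_const_sub (fun u => γ u - 2 * infIcc γ u s) (a + s) (a + s - v) s
  rw [add_sub_cancel_right, sub_sub_cancel] at this
  exact this.symm

theorem infIcc_mul_sub_add_infIcc {h : ℝ → ℝ} (has : a ≤ s) (hγ : ContinuousOn γ (Icc a s))
    (hh : ContinuousOn h (Icc a s)) {τ : ℝ} (hτ : 0 ≤ τ) :
    infIcc (fun u => τ * (γ u - 2 * infIcc γ a u) + infIcc (fun v => h v + τ * infIcc γ a v) a u)
      a s = infIcc (fun u => τ * γ u + infIcc h a u) a s - τ * infIcc γ a s := by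
  have hR := continuousOn_infIcc hγ
  have hγb : BddBelow ((fun u => τ * γ u) '' Icc a s) :=
    isCompact_Icc.bddBelow_image (by fun_prop)
  have hhb : BddBelow (h '' Icc a s) := isCompact_Icc.bddBelow_image hh
  rw [infIcc_add_infIcc_comm has (isCompact_Icc.bddBelow_image (by fun_prop))
      (isCompact_Icc.bddBelow_image (by fun_prop)), infIcc_add_infIcc_comm has hγb hhb,
    sub_eq_add_neg, ← infIcc_add_const has (bddBelow_image_add hhb
      (bddBelow_image_infIcc hγb (fun v hv => hv.2) fun v hv => Icc_subset_Icc_left hv.1))]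
  refine infIcc_congr fun v hv => ?_
  simp only [infIcc_const_mul hτ, infIcc_sub_two_mul_infIcc hγ hv]
  ring

end RunningInfimum

section AlternatingInfimum

open Set

/-- The iterated infimum of `[j] X(u₁) + [j+1] Y(u₂) + [j+2] X(u₃) + ⋯` over
`t ≥ u₁ ≥ u₂ ≥ ⋯ ≥ uₙ ≥ 0`, where `[k] = quantumInt m k`. With `j = 1` these are the coefficients of
the roots in a composition of Pitman transforms along an alternating word. -/
noncomputable def altInf (m : ℕ) : ℕ → ℕ → (ℝ → ℝ) → (ℝ → ℝ) → ℝ → ℝ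
  | 0, _, _, _ => 0
  | n + 1, j, X, Y => infIcc (fun u => quantumInt m j * X u + altInf m n (j + 1) Y X u) 0

variable {m : ℕ} {X Y : ℝ → ℝ} {t : ℝ}

theorem altInf_zero (m j : ℕ) (X Y : ℝ → ℝ) (t : ℝ) : altInf m 0 j X Y t = 0 := rfl

theorem altInf_succ (m n j : ℕ) (X Y : ℝ → ℝ) (t : ℝ) :
    altInf m (n + 1) j X Y t =
      infIcc (fun u => quantumInt m j * X u + altInf m n (j + 1) Y X u) 0 t := rfl

theorem continuousOn_altInf (n j : ℕ) (hX : ContinuousOn X (Icc 0 t))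
    (hY : ContinuousOn Y (Icc 0 t)) : ContinuousOn (altInf m n j X Y) (Icc 0 t) := by
  induction n generalizing j X Y with
  | zero => exact continuousOn_const
  | succ n ih => exact continuousOn_infIcc ((continuousOn_const.mul hX).add (ih _ hY hX))

theorem altInf_succ_eq_of_quantumInt_eq_zero {n j : ℕ} (hj : quantumInt m (j + n) = 0)
    (ht : 0 ≤ t) : altInf m (n + 1) j X Y t = altInf m n j X Y t := by
  induction n generalizing j X Y t with
  | zero =>
    rw [altInf_succ, add_zero] at *
    simp only [hj, zero_mul, altInf_zero, zero_add, infIcc_const ht]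
  | succ n ih =>
    rw [altInf_succ, altInf_succ m n]
    refine infIcc_congr fun u hu => ?_
    simp only [ih (j := j + 1) (by rw [← hj]; congr 1; omega) hu.1]

/-- Reflecting `X` at its running infimum shortens the iterated infimum by one. -/
theorem altInf_sub_two_mul_infIcc (hX : ContinuousOn X (Icc 0 t)) (hY : ContinuousOn Y (Icc 0 t))
    {i j : ℕ} (hj : ∀ n ≤ j + 2 * i, 0 ≤ quantumInt m n) {s : ℝ} (hs : s ∈ Icc 0 t) :
    altInf m (2 * i) j (fun u => X u - 2 * infIcc X 0 u)
        (fun u => Y u + bondWeight m * infIcc X 0 u) s =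
      altInf m (2 * i + 1) j X Y s - quantumInt m j * infIcc X 0 s := by
  have hτ : 0 ≤ quantumInt m j := hj j (by omega)
  induction i generalizing j s with
  | zero =>
    simp only [mul_zero, zero_add, altInf_succ, altInf_zero, add_zero, infIcc_const_mul hτ,
      sub_self]
  | succ i ih =>
    have hinner : EqOn
        (fun v => quantumInt m (j + 1) * (Y v + bondWeight m * infIcc X 0 v) +
          altInf m (2 * i) (j + 2) (fun u => X u - 2 * infIcc X 0 u)
            (fun u => Y u + bondWeight m * infIcc X 0 u) v)
        (fun v => quantumInt m (j + 1) * Y v + altInf m (2 * i + 1) (j + 2) X Y v +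
          quantumInt m j * infIcc X 0 v) (Icc 0 s) := fun v hv => by
      simp only [ih (j := j + 2) (fun n hn => hj n (by omega)) ⟨hv.1, hv.2.trans hs.2⟩
        (hj _ (by omega)), quantumInt_add_two]
      ring
    have hst : Icc 0 s ⊆ Icc 0 t := Icc_subset_Icc_right hs.2
    have hh := ((continuousOn_const (c := quantumInt m (j + 1))).mul hY |>.add
      (continuousOn_altInf (m := m) (2 * i + 1) (j + 2) hX hY)).mono hst
    refine (infIcc_congr fun u hu => ?_).trans
      (infIcc_mul_sub_add_infIcc hs.1 (hX.mono hst) hh hτ)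
    exact congrArg _ (infIcc_congr (hinner.mono (Icc_subset_Icc_right hu.2)))

theorem altInf_add_bondWeight_mul_infIcc (hX : ContinuousOn X (Icc 0 t))
    (hY : ContinuousOn Y (Icc 0 t)) {i : ℕ} (hj : ∀ n ≤ 2 * i + 2, 0 ≤ quantumInt m n) :
    altInf m (2 * i + 1) 1 (fun u => X u + bondWeight m * infIcc Y 0 u)
        (fun u => Y u - 2 * infIcc Y 0 u) t =
      altInf m (2 * i + 2) 1 X Y t := by
  rw [altInf_succ, altInf_succ]
  refine infIcc_congr fun u hu => ?_
  have hinner := altInf_sub_two_mul_infIcc (j := 2) (i := i) hY hX (fun n hn => hj n (by omega))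
    hu
  simp only [Nat.reduceAdd, hinner, quantumInt_one, quantumInt_two]
  ring

end AlternatingInfimum

section Paths

open Set

variable {B V : Type*} [AddCommGroup V] [Module ℝ V] {α : B → V} {αv : B → Module.Dual ℝ V}
  {T : ℝ} {π π' : ℝ → V}

/-- A path on `[0, T]` from the origin whose coordinates along the coroots are continuous. This is
all the continuity that Pitman transforms see, so `V` needs no topology. -/
structure IsCoordPath (αv : B → Module.Dual ℝ V) (T : ℝ) (π : ℝ → V) : Prop where
  map_zero : π 0 = 0
  continuousOn_coord : ∀ s, ContinuousOn (fun u => αv s (π u)) (Icc 0 T)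

theorem pitman_apply (a : V) (f : Module.Dual ℝ V) (π : ℝ → V) (t : ℝ) :
    pitman a f π t = π t - infIcc (fun u => f (π u)) 0 t • a := rfl

theorem coroot_pitman (a : V) (f g : Module.Dual ℝ V) (π : ℝ → V) (t : ℝ) :
    g (pitman a f π t) = g (π t) - infIcc (fun u => f (π u)) 0 t * g a := by
  rw [pitman_apply, map_sub, map_smul, smul_eq_mul]

theorem pitmanWord_nil (π : ℝ → V) : pitmanWord α αv [] π = π := rfl

theorem pitmanWord_cons (s : B) (l : List B) (π : ℝ → V) :
    pitmanWord α αv (s :: l) π = pitman (α s) (αv s) (pitmanWord α αv l π) := rfl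

theorem pitmanWord_append (l l' : List B) (π : ℝ → V) :
    pitmanWord α αv (l ++ l') π = pitmanWord α αv l (pitmanWord α αv l' π) := by
  induction l with
  | nil => rfl
  | cons s l ih => rw [List.cons_append, pitmanWord_cons, ih, pitmanWord_cons]

theorem pitman_eqOn (h : EqOn π π' (Icc 0 T)) (a : V) (f : Module.Dual ℝ V) :
    EqOn (pitman a f π) (pitman a f π') (Icc 0 T) := fun t ht => by
  have hf : EqOn (fun u => f (π u)) (fun u => f (π' u)) (Icc 0 t) := fun u hu => by
    simp only [h ⟨hu.1, hu.2.trans ht.2⟩]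
  rw [pitman_apply, pitman_apply, h ht, infIcc_congr hf]

theorem pitmanWord_eqOn (h : EqOn π π' (Icc 0 T)) (l : List B) :
    EqOn (pitmanWord α αv l π) (pitmanWord α αv l π') (Icc 0 T) := by
  induction l with
  | nil => exact h
  | cons s l ih => exact pitman_eqOn ih _ _

theorem pitmanWord_rescale {p : B → ℝ} (hp : ∀ s, 0 < p s) (l : List B) :
    pitmanWord (fun s => (p s)⁻¹ • α s) (fun s => p s • αv s) l = pitmanWord α αv l := by
  have hpitman (s : B) : pitman ((p s)⁻¹ • α s) (p s • αv s) = pitman (α s) (αv s) := by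
    funext π t
    simp only [pitman_apply, LinearMap.smul_apply, smul_eq_mul, infIcc_const_mul (hp s).le,
      smul_smul]
    rw [mul_right_comm, mul_inv_cancel₀ (hp s).ne', one_mul]
  simp only [pitmanWord, hpitman]

namespace IsCoordPath

theorem congr (h : IsCoordPath αv T π) (hT : 0 ≤ T) (heq : EqOn π' π (Icc 0 T)) :
    IsCoordPath αv T π' where
  map_zero := (heq ⟨le_rfl, hT⟩).trans h.map_zero
  continuousOn_coord s := (h.continuousOn_coord s).congr fun u hu => by simp only [heq hu]

theorem pitman (h : IsCoordPath αv T π) (s : B) (a : V) :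
    IsCoordPath αv T (pitman a (αv s) π) where
  map_zero := by simp [pitman_apply, h.map_zero, infIcc_self]
  continuousOn_coord t := by
    simp only [coroot_pitman]
    exact (h.continuousOn_coord t).sub
      ((continuousOn_infIcc (h.continuousOn_coord s)).mul continuousOn_const)

theorem pitmanWord (h : IsCoordPath αv T π) (l : List B) :
    IsCoordPath αv T (pitmanWord α αv l π) := by
  induction l with
  | nil => exact h
  | cons s l ih => exact ih.pitman s _

theorem mono (h : IsCoordPath αv T π) {t : ℝ} (ht : t ≤ T) : IsCoordPath αv t π where
  map_zero := h.map_zero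
  continuousOn_coord s := (h.continuousOn_coord s).mono (Icc_subset_Icc_right ht)

theorem infIcc_coroot_nonpos (h : IsCoordPath αv T π) (hT : 0 ≤ T) (s : B) :
    infIcc (fun u => αv s (π u)) 0 T ≤ 0 := by
  have h₀ := infIcc_le (isCompact_Icc.bddBelow_image (h.continuousOn_coord s)) ⟨le_rfl, hT⟩
  simpa only [h.map_zero, _root_.map_zero] using h₀

theorem infIcc_coroot_le (h : IsCoordPath αv T π) (hT : 0 ≤ T) (s : B) :
    infIcc (fun u => αv s (π u)) 0 T ≤ αv s (π T) :=
  infIcc_le (isCompact_Icc.bddBelow_image (h.continuousOn_coord s)) ⟨hT, le_rfl⟩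

end IsCoordPath

/-- Each further letter moves one running infimum from the path into both iterated infima. -/
theorem pitmanWord_altWord_succ (hα : ∀ s, αv s (α s) = 2) {a b : B} {m : ℕ}
    (hab : αv a (α b) = -bondWeight m) (hba : αv b (α a) = -bondWeight m) {k : ℕ}
    (hk : ∀ n ≤ k + 1, 0 ≤ quantumInt m n) (hT : 0 ≤ T) (hπ : IsCoordPath αv T π) :
    pitmanWord α αv (altWord a b (k + 1)) π T = π T -
      altInf m (k + 1) 1 (fun u => αv a (π u)) (fun u => αv b (π u)) T • α a -
      altInf m k 1 (fun u => αv b (π u)) (fun u => αv a (π u)) T • α b := by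
  have ha := hπ.continuousOn_coord a
  have hb := hπ.continuousOn_coord b
  induction k generalizing π with
  | zero =>
    simp [altWord, pitmanWord_cons, pitmanWord_nil, pitman_apply, altInf_succ, altInf_zero,
      quantumInt_one]
  | succ k ih =>
    have ih' (c : B) := ih (fun n hn => hk n (by omega)) (hπ.pitman c (α c))
      ((hπ.pitman c (α c)).continuousOn_coord a) ((hπ.pitman c (α c)).continuousOn_coord b)
    simp only [coroot_pitman] at ih'
    obtain ⟨i, rfl | rfl⟩ := k.even_or_odd'
    · have h := ih' b
      simp only [hα, hab, mul_neg, sub_neg_eq_add, mul_comm _ (2 : ℝ),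
        mul_comm _ (bondWeight m)] at h
      rw [altWord_two_mul_add_two, pitmanWord_append, pitmanWord_cons, pitmanWord_nil, h,
        altInf_add_bondWeight_mul_infIcc ha hb hk,
        altInf_sub_two_mul_infIcc hb ha (fun n hn => hk n (by omega)) ⟨hT, le_rfl⟩,
        quantumInt_one, pitman_apply]
      module
    · have h := ih' a
      simp only [hα, hba, mul_neg, sub_neg_eq_add, mul_comm _ (2 : ℝ),
        mul_comm _ (bondWeight m)] at h
      have hword : altWord a b (2 * i + 1 + 1 + 1) = altWord a b (2 * i + 1 + 1) ++ [a] :=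
        altWord_two_mul_add_one a b (i + 1)
      rw [hword, pitmanWord_append, pitmanWord_cons, pitmanWord_nil, h,
        altInf_add_bondWeight_mul_infIcc hb ha (fun n hn => hk n (by omega)),
        show 2 * i + 1 + 1 = 2 * (i + 1) from rfl,
        altInf_sub_two_mul_infIcc ha hb (fun n hn => hk n (by omega)) ⟨hT, le_rfl⟩,
        quantumInt_one, pitman_apply]
      module

theorem pitmanWord_altWord_swap (hα : ∀ s, αv s (α s) = 2) {a b : B} {m : ℕ} (hm : 2 ≤ m)
    (hab : αv a (α b) = -bondWeight m) (hba : αv b (α a) = -bondWeight m) (hT : 0 ≤ T)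
    (hπ : IsCoordPath αv T π) :
    pitmanWord α αv (altWord a b m) π T = pitmanWord α αv (altWord b a m) π T := by
  obtain ⟨k, rfl⟩ : ∃ k, m = k + 1 := ⟨m - 1, by omega⟩
  have hk : ∀ n ≤ k + 1, 0 ≤ quantumInt (k + 1) n := fun n hn =>
    quantumInt_nonneg (by omega) (.inr hn)
  have hzero : quantumInt (k + 1) (1 + k) = 0 := by rw [add_comm 1 k, quantumInt_self hm]
  rw [pitmanWord_altWord_succ hα hab hba hk hT hπ, pitmanWord_altWord_succ hα hba hab hk hT hπ,
    altInf_succ_eq_of_quantumInt_eq_zero hzero hT, altInf_succ_eq_of_quantumInt_eq_zero hzero hT,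
    sub_right_comm]

variable {W : Type*} [Group W] {M : CoxeterMatrix B} {cs : CoxeterSystem M W}
  {ρ : W →* (V ≃ₗ[ℝ] V)}

theorem IsReflectionRep.pitmanWord_altWord_swap (h : IsReflectionRep cs α αv ρ) {a b : B}
    (hab : a ≠ b) (h₀ : M a b ≠ 0) (hT : 0 ≤ T) (hπ : IsCoordPath αv T π) :
    pitmanWord α αv (altWord a b (M a b)) π T = pitmanWord α αv (altWord b a (M a b)) π T := by
  classical
  obtain ⟨c, hc, hba, hab'⟩ := h.exists_scale a b hab
  have hm : 2 ≤ M a b := by have := M.off_diagonal a b hab; omega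
  let p : B → ℝ := Function.update 1 b c
  have hp (s : B) : 0 < p s := by
    obtain rfl | hs := eq_or_ne s b
    · simpa [p] using hc
    · simp [p, hs]
  rw [← pitmanWord_rescale hp (altWord a b _), ← pitmanWord_rescale hp (altWord b a _)]
  have hπp : IsCoordPath (fun s => p s • αv s) T π :=
    ⟨hπ.map_zero, fun s => continuousOn_const.mul (hπ.continuousOn_coord s)⟩
  refine Pitman.pitmanWord_altWord_swap (fun s => ?_) hm ?_ ?_ hT hπp
  · simp [h.coroot_root, (hp s).ne']
  · simp [p, hab, hab', hc.ne']
  · simp [p, hab, hba]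

theorem IsReflectionRep.pitmanWord_eqOn_of_braidStep (h : IsReflectionRep cs α αv ρ)
    {l l' : List B} (hstep : BraidStep M l l') (hπ : IsCoordPath αv T π) :
    EqOn (pitmanWord α αv l π) (pitmanWord α αv l' π) (Icc 0 T) := by
  obtain ⟨l₁, l₂, hab, h₀⟩ := hstep
  simp only [pitmanWord_append]
  refine pitmanWord_eqOn (fun t ht => ?_) l₁
  exact h.pitmanWord_altWord_swap hab h₀ ht.1 ((hπ.pitmanWord l₂).mono ht.2)

theorem IsReflectionRep.pitmanWord_eqOn_of_isReduced (h : IsReflectionRep cs α αv ρ)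
    {l l' : List B} (hl : cs.IsReduced l) (hl' : cs.IsReduced l')
    (hll' : cs.wordProd l = cs.wordProd l') (hπ : IsCoordPath αv T π) :
    EqOn (pitmanWord α αv l π) (pitmanWord α αv l' π) (Icc 0 T) := by
  have hsteps := reflTransGen_braidStep_of_isReduced hl hl' hll'
  clear hl hl' hll'
  induction hsteps with
  | refl => exact fun _ _ => rfl
  | tail _ hstep ih => exact ih.trans (h.pitmanWord_eqOn_of_braidStep hstep hπ)

end Paths

section Reversal

open Set

variable {B V : Type*} [AddCommGroup V] {T : ℝ} {π π' : ℝ → V}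

/-- The time reversal `κ` of a path on `[0, T]`, which conjugates `P_α` to `E_α`. -/
def reversePath (T : ℝ) (π : ℝ → V) (t : ℝ) : V := π (T - t) - π T

theorem reversePath_reversePath (h₀ : π 0 = 0) : reversePath T (reversePath T π) = π := by
  funext t
  simp [reversePath, h₀]

theorem reversePath_apply_end (h₀ : π 0 = 0) : reversePath T π T = -π T := by
  simp [reversePath, h₀]

variable [Module ℝ V] {α : B → V} {αv : B → Module.Dual ℝ V}

theorem IsCoordPath.reversePath (h : IsCoordPath αv T π) :
    IsCoordPath αv T (reversePath T π) where
  map_zero := by simp [Pitman.reversePath]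
  continuousOn_coord s := by
    simp only [Pitman.reversePath, map_sub]
    refine ((h.continuousOn_coord s).comp (by fun_prop) fun t ht => ?_).sub continuousOn_const
    exact ⟨by linarith [ht.2], by linarith [ht.1]⟩

theorem copitman_apply (a : V) (f : Module.Dual ℝ V) (π : ℝ → V) (t : ℝ) :
    copitman T a f π t = π t -
      (infIcc (fun u => f (π u)) t T - infIcc (fun u => f (π u)) 0 T) • a := by
  rw [sub_smul, ← sub_add]
  rfl

theorem copitman_eqOn (h : EqOn π π' (Icc 0 T)) (a : V) (f : Module.Dual ℝ V) :
    EqOn (copitman T a f π) (copitman T a f π') (Icc 0 T) := fun t ht => by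
  have hf : EqOn (fun u => f (π u)) (fun u => f (π' u)) (Icc 0 T) := fun u hu => by simp only [h hu]
  rw [copitman_apply, copitman_apply, h ht, infIcc_congr hf,
    infIcc_congr (hf.mono (Icc_subset_Icc_left ht.1))]

theorem IsCoordPath.copitman_eqOn_reversePath (h : IsCoordPath αv T π) (s : B) (a : V) :
    EqOn (copitman T a (αv s) π)
      (Pitman.reversePath T (_root_.pitman a (αv s) (Pitman.reversePath T π))) (Icc 0 T) := by
  have hinf : ∀ t ∈ Icc 0 T, infIcc (fun u => αv s (Pitman.reversePath T π u)) 0 (T - t) =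
      infIcc (fun u => αv s (π u)) t T - αv s (π T) := fun t ht => by
    have hrev : ContinuousOn (fun u => αv s (π (T - u))) (Icc 0 (T - t)) :=
      (h.continuousOn_coord s).comp (by fun_prop) fun u hu =>
        ⟨by linarith [hu.2, ht.1], by linarith [hu.1]⟩
    simp only [Pitman.reversePath, map_sub, sub_eq_add_neg (αv s _)]
    rw [infIcc_add_const (sub_nonneg.2 ht.2) (isCompact_Icc.bddBelow_image hrev),
      infIcc_comp_const_sub (fun u => αv s (π u)), sub_sub_cancel, sub_zero, sub_eq_add_neg]
  intro t ht
  have hT := hinf 0 ⟨le_rfl, ht.1.trans ht.2⟩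
  rw [sub_zero] at hT
  simp only [Pitman.reversePath, pitman_apply, copitman_apply] at hinf hT ⊢
  rw [hinf t ht, hT, sub_sub_cancel, sub_self, h.map_zero]
  module

theorem IsCoordPath.copitmanWord_eqOn_reversePath (h : IsCoordPath αv T π) (l : List B) :
    EqOn (copitmanWord T α αv l π)
      (Pitman.reversePath T (_root_.pitmanWord α αv l (Pitman.reversePath T π))) (Icc 0 T) := by
  induction l with
  | nil =>
    rw [pitmanWord_nil, reversePath_reversePath h.map_zero]
    exact fun _ _ => rfl
  | cons s l ih =>
    have hl := h.reversePath.pitmanWord (α := α) l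
    refine (copitman_eqOn ih _ _).trans ((hl.reversePath.copitman_eqOn_reversePath s _).trans ?_)
    rw [reversePath_reversePath hl.map_zero, pitmanWord_cons]
    exact fun _ _ => rfl

theorem IsCoordPath.copitman (h : IsCoordPath αv T π) (hT : 0 ≤ T) (s : B) (a : V) :
    IsCoordPath αv T (copitman T a (αv s) π) :=
  (h.reversePath.pitman s a).reversePath.congr hT (h.copitman_eqOn_reversePath s a)

theorem IsCoordPath.copitmanWord (h : IsCoordPath αv T π) (hT : 0 ≤ T) (l : List B) :
    IsCoordPath αv T (copitmanWord T α αv l π) :=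
  (h.reversePath.pitmanWord l).reversePath.congr hT (h.copitmanWord_eqOn_reversePath l)

theorem IsCoordPath.pitmanWord_reversePath_apply_end (h : IsCoordPath αv T π) (hT : 0 ≤ T)
    (l : List B) :
    _root_.pitmanWord α αv l (Pitman.reversePath T π) T = -_root_.copitmanWord T α αv l π T := by
  rw [h.copitmanWord_eqOn_reversePath l ⟨hT, le_rfl⟩,
    reversePath_apply_end (h.reversePath.pitmanWord l).map_zero, neg_neg]

theorem pitman_copitman_eqOn {a : V} {f : Module.Dual ℝ V} (hfa : f a = 2)
    (hf : ContinuousOn (fun u => f (π u)) (Icc 0 T)) :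
    EqOn (pitman a f (copitman T a f π)) (pitman a f π) (Icc 0 T) := by
  intro t ht
  set γ := fun u => f (π u)
  have hγE (u : ℝ) : f (copitman T a f π u) = γ u - 2 * infIcc γ u T + 2 * infIcc γ 0 T := by
    rw [copitman_apply, map_sub, map_smul, smul_eq_mul, hfa]
    ring
  have hinf : infIcc (fun u => f (copitman T a f π u)) 0 t =
      infIcc γ 0 t - infIcc γ t T + infIcc γ 0 T := by
    have hbdd : BddBelow ((fun u => γ u - 2 * infIcc γ u T) '' Icc 0 t) :=
      ⟨-γ T, forall_mem_image.2 fun u hu => by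
        have hbdd : BddBelow (γ '' Icc u T) :=
          isCompact_Icc.bddBelow_image (hf.mono (Icc_subset_Icc_left hu.1))
        have hu' := infIcc_le hbdd ⟨le_rfl, hu.2.trans ht.2⟩
        have hT := infIcc_le hbdd ⟨hu.2.trans ht.2, le_rfl⟩
        linarith⟩
    simp only [hγE]
    rw [infIcc_add_const ht.1 hbdd, infIcc_sub_two_mul_infIcc_right hf ht]
    ring
  rw [pitman_apply, pitman_apply, hinf, copitman_apply]
  module

end Reversal

section Energy

open Set

variable {B W V : Type*} [Group W] {M : CoxeterMatrix B} {cs : CoxeterSystem M W}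
  [AddCommGroup V] [Module ℝ V] {α : B → V} {αv : B → Module.Dual ℝ V} {ρ : W →* (V ≃ₗ[ℝ] V)}
  [Fintype B] [Fintype W]

/-- The sum of the squares of the coordinates along all coroots, a `W`-invariant quadratic form
under which Pitman transforms can only move the endpoint of a path upwards. -/
def energy (αv : B → Module.Dual ℝ V) (ρ : W →* (V ≃ₗ[ℝ] V)) (v : V) : ℝ :=
  ∑ w : W, ∑ s, αv s (ρ w v) ^ 2

theorem energy_neg (αv : B → Module.Dual ℝ V) (ρ : W →* (V ≃ₗ[ℝ] V)) (v : V) :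
    energy αv ρ (-v) = energy αv ρ v := by
  simp only [energy, map_neg, neg_sq]

theorem energy_apply (αv : B → Module.Dual ℝ V) (ρ : W →* (V ≃ₗ[ℝ] V)) (w : W) (v : V) :
    energy αv ρ (ρ w v) = energy αv ρ v := by
  simp only [energy, ← LinearEquiv.mul_apply, ← map_mul]
  exact Fintype.sum_equiv (Equiv.mulRight w) _ _ fun _ => rfl

theorem energy_add_smul (αv : B → Module.Dual ℝ V) (ρ : W →* (V ≃ₗ[ℝ] V)) (v a : V) :
    ∃ p : ℝ, ∀ x : ℝ,
      energy αv ρ (v + x • a) = energy αv ρ v + 2 * x * p + x ^ 2 * energy αv ρ a := by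
  refine ⟨∑ w : W, ∑ s, αv s (ρ w v) * αv s (ρ w a), fun x => ?_⟩
  simp only [energy, Finset.mul_sum, ← Finset.sum_add_distrib]
  refine Finset.sum_congr rfl fun w _ => Finset.sum_congr rfl fun s _ => ?_
  simp only [map_add, map_smul, smul_eq_mul]
  ring

namespace IsReflectionRep

theorem energy_root_pos (h : IsReflectionRep cs α αv ρ) (s : B) : 0 < energy αv ρ (α s) := by
  refine Finset.sum_pos' (fun w _ => Finset.sum_nonneg fun t _ => sq_nonneg _)
    ⟨1, Finset.mem_univ _, Finset.sum_pos' (fun t _ => sq_nonneg _) ⟨s, Finset.mem_univ _, ?_⟩⟩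
  rw [map_one, LinearEquiv.coe_one, id, h.coroot_root]
  norm_num

theorem energy_add_smul_root (h : IsReflectionRep cs α αv ρ) (s : B) (v : V) (x : ℝ) :
    energy αv ρ (v + x • α s) = energy αv ρ v + x * (αv s v + x) * energy αv ρ (α s) := by
  obtain ⟨p, hp⟩ := energy_add_smul αv ρ v (α s)
  -- With this `y` the reflection in `s` maps `v + y • α s` to `v + (y - 1) • α s`.
  let y := (1 - αv s v) / 2
  have hrefl : ρ (cs.simple s) (v + y • α s) = v + (y - 1) • α s := by
    rw [h.simple_apply, map_add, map_smul, h.coroot_root, smul_eq_mul]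
    module
  have hinv := energy_apply αv ρ (cs.simple s) (v + y • α s)
  rw [hrefl, hp, hp] at hinv
  rw [hp]
  linear_combination (-x) * hinv

theorem energy_pitman (h : IsReflectionRep cs α αv ρ) (s : B) (π : ℝ → V) (T : ℝ) :
    energy αv ρ (pitman (α s) (αv s) π T) = energy αv ρ (π T) +
      infIcc (fun u => αv s (π u)) 0 T * (infIcc (fun u => αv s (π u)) 0 T - αv s (π T)) *
        energy αv ρ (α s) := by
  rw [pitman_apply, sub_eq_add_neg, ← neg_smul, h.energy_add_smul_root]
  ring

variable {T : ℝ} {π : ℝ → V}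

theorem energy_le_energy_pitman (h : IsReflectionRep cs α αv ρ) (hT : 0 ≤ T)
    (hπ : IsCoordPath αv T π) (s : B) :
    energy αv ρ (π T) ≤ energy αv ρ (pitman (α s) (αv s) π T) := by
  rw [h.energy_pitman]
  exact le_add_of_nonneg_right (mul_nonneg (mul_nonneg_of_nonpos_of_nonpos
    (hπ.infIcc_coroot_nonpos hT s) (sub_nonpos.2 (hπ.infIcc_coroot_le hT s)))
    (h.energy_root_pos s).le)

theorem exists_apply_eq_pitman_of_energy_eq (h : IsReflectionRep cs α αv ρ) {s : B}
    (heq : energy αv ρ (pitman (α s) (αv s) π T) = energy αv ρ (π T)) :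
    ∃ w : W, ρ w (π T) = pitman (α s) (αv s) π T := by
  rw [h.energy_pitman, add_eq_left, mul_eq_zero, or_iff_left (h.energy_root_pos s).ne',
    mul_eq_zero, sub_eq_zero] at heq
  obtain hzero | hend := heq
  · exact ⟨1, by rw [pitman_apply, hzero, zero_smul, sub_zero, map_one, LinearEquiv.coe_one, id]⟩
  · exact ⟨cs.simple s, by rw [pitman_apply, hend, h.simple_apply]⟩

theorem energy_le_energy_pitmanWord (h : IsReflectionRep cs α αv ρ) (hT : 0 ≤ T)
    (hπ : IsCoordPath αv T π) (l : List B) :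
    energy αv ρ (π T) ≤ energy αv ρ (pitmanWord α αv l π T) := by
  induction l with
  | nil => exact le_rfl
  | cons s l ih => exact ih.trans (h.energy_le_energy_pitman hT (hπ.pitmanWord l) s)

theorem exists_apply_eq_pitmanWord_of_energy_le (h : IsReflectionRep cs α αv ρ) (hT : 0 ≤ T)
    (hπ : IsCoordPath αv T π) {l : List B}
    (hle : energy αv ρ (pitmanWord α αv l π T) ≤ energy αv ρ (π T)) :
    ∃ w : W, ρ w (π T) = pitmanWord α αv l π T := by
  induction l with
  | nil => exact ⟨1, by rw [map_one, LinearEquiv.coe_one, id, pitmanWord_nil]⟩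
  | cons s l ih =>
    have hstep := h.energy_le_energy_pitman hT (hπ.pitmanWord (α := α) l) s
    obtain ⟨w, hw⟩ := ih (hstep.trans hle)
    obtain ⟨u, hu⟩ := h.exists_apply_eq_pitman_of_energy_eq (π := pitmanWord α αv l π)
      (le_antisymm (hle.trans (h.energy_le_energy_pitmanWord hT hπ l)) hstep)
    exact ⟨u * w, by rw [map_mul, LinearEquiv.mul_apply, hw, hu, pitmanWord_cons]⟩

end IsReflectionRep

end Energy

section LongestElement

open Set

variable {B W V : Type*} [Group W] {M : CoxeterMatrix B} {cs : CoxeterSystem M W}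

theorem isLeftDescent_of_forall_length_le {w₀ : W} (hw₀ : ∀ w, cs.length w ≤ cs.length w₀) (s : B) :
    cs.IsLeftDescent w₀ s :=
  (hw₀ _).lt_of_ne (cs.length_simple_mul_ne w₀ s)

theorem isRightDescent_of_forall_length_le {w₀ : W} (hw₀ : ∀ w, cs.length w ≤ cs.length w₀)
    (s : B) : cs.IsRightDescent w₀ s :=
  (hw₀ _).lt_of_ne (cs.length_mul_simple_ne w₀ s)

variable [AddCommGroup V] [Module ℝ V] {α : B → V} {αv : B → Module.Dual ℝ V}
  {ρ : W →* (V ≃ₗ[ℝ] V)} {T : ℝ} {π : ℝ → V} {l l' : List B}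

namespace IsReflectionRep

theorem coroot_pitmanWord_nonneg (h : IsReflectionRep cs α αv ρ) (hl : cs.IsReduced l) {s : B}
    (hs : cs.IsLeftDescent (cs.wordProd l) s) (hT : 0 ≤ T) (hπ : IsCoordPath αv T π) :
    0 ≤ αv s (pitmanWord α αv l π T) := by
  obtain ⟨r, hr, hrl⟩ := isReducedPrefix_singleton_of_isLeftDescent hs
  rw [List.singleton_append] at hr hrl
  rw [h.pitmanWord_eqOn_of_isReduced hl hr hrl.symm hπ ⟨hT, le_rfl⟩, pitmanWord_cons,
    coroot_pitman, h.coroot_root]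
  have hr := hπ.pitmanWord (α := α) r
  linarith [hr.infIcc_coroot_nonpos hT s, hr.infIcc_coroot_le hT s]

theorem pitmanWord_copitman_eqOn (h : IsReflectionRep cs α αv ρ) (hl : cs.IsReduced l) {s : B}
    (hs : cs.IsRightDescent (cs.wordProd l) s) (hT : 0 ≤ T) (hπ : IsCoordPath αv T π) :
    EqOn (pitmanWord α αv l (copitman T (α s) (αv s) π)) (pitmanWord α αv l π) (Icc 0 T) := by
  obtain ⟨r, hr, hrl⟩ := exists_isReduced_append_singleton_of_isRightDescent hs
  refine (h.pitmanWord_eqOn_of_isReduced hl hr hrl.symm (hπ.copitman hT s _)).trans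
    (EqOn.trans ?_ (h.pitmanWord_eqOn_of_isReduced hl hr hrl.symm hπ).symm)
  rw [pitmanWord_append, pitmanWord_append]
  exact pitmanWord_eqOn
    (pitman_copitman_eqOn (h.coroot_root s) (hπ.continuousOn_coord s)) r

theorem pitmanWord_copitmanWord_eqOn (h : IsReflectionRep cs α αv ρ) (hl : cs.IsReduced l)
    (hs : ∀ s, cs.IsRightDescent (cs.wordProd l) s) (hT : 0 ≤ T) (hπ : IsCoordPath αv T π)
    (l' : List B) :
    EqOn (pitmanWord α αv l (copitmanWord T α αv l' π)) (pitmanWord α αv l π) (Icc 0 T) := by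
  induction l' with
  | nil => exact fun _ _ => rfl
  | cons s l' ih =>
    exact (h.pitmanWord_copitman_eqOn hl (hs s) hT (hπ.copitmanWord hT l')).trans ih

theorem pitmanWord_reversePath_pitmanWord (h : IsReflectionRep cs α αv ρ) (hl : cs.IsReduced l)
    (hs : ∀ s, cs.IsRightDescent (cs.wordProd l) s) (hT : 0 ≤ T) (hπ : IsCoordPath αv T π)
    (l' : List B) :
    pitmanWord α αv l (reversePath T (pitmanWord α αv l' π)) T = -copitmanWord T α αv l π T := by
  have heq := hπ.reversePath.copitmanWord_eqOn_reversePath (α := α) l'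
  rw [reversePath_reversePath hπ.map_zero] at heq
  rw [← hπ.pitmanWord_reversePath_apply_end hT,
    ← h.pitmanWord_copitmanWord_eqOn hl hs hT hπ.reversePath l' ⟨hT, le_rfl⟩,
    pitmanWord_eqOn heq l ⟨hT, le_rfl⟩]

theorem exists_apply_copitmanWord_eq_pitmanWord [Finite W]
    (h : IsReflectionRep cs α αv ρ) (hl : cs.IsReduced l) (hl' : cs.IsReduced l')
    (hs : ∀ s, cs.IsRightDescent (cs.wordProd l) s)
    (hs' : ∀ s, cs.IsRightDescent (cs.wordProd l') s) (hT : 0 ≤ T) (hπ : IsCoordPath αv T π) :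
    ∃ w : W, ρ w (copitmanWord T α αv l π T) = pitmanWord α αv l' π T := by
  have := Finite.of_injective cs.simple (simple_injective cs)
  have := Fintype.ofFinite B
  have := Fintype.ofFinite W
  have hup : energy αv ρ (pitmanWord α αv l' π T) ≤ energy αv ρ (copitmanWord T α αv l π T) := by
    have hle := h.energy_le_energy_pitmanWord hT (hπ.pitmanWord (α := α) l').reversePath l
    rwa [h.pitmanWord_reversePath_pitmanWord hl hs hT hπ,
      reversePath_apply_end (hπ.pitmanWord l').map_zero, energy_neg, energy_neg] at hle
  have habsorb := h.pitmanWord_copitmanWord_eqOn hl' hs' hT hπ l ⟨hT, le_rfl⟩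
  rw [← habsorb] at hup ⊢
  exact h.exists_apply_eq_pitmanWord_of_energy_le hT (hπ.copitmanWord hT l) hup

end IsReflectionRep

end LongestElement

section CartanCondition

variable {B W V : Type*} [Group W] {M : CoxeterMatrix B} {cs : CoxeterSystem M W}
  [AddCommGroup V] [Module ℝ V] {α : B → V} {αv : B → Module.Dual ℝ V} {ρ : W →* (V ≃ₗ[ℝ] V)}

theorem isReflectionRep_of_mul_eq_four_mul_cos_sq (hpair : ∀ s, αv s (α s) = 2)
    (hρ : ∀ s v, ρ (cs.simple s) v = v - αv s v • α s)
    (hM : ∀ s t : B, s ≠ t →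
      (M s t = 2 ∧ αv s (α t) = 0 ∧ αv t (α s) = 0) ∨
      (αv s (α t) < 0 ∧ αv t (α s) < 0 ∧
        αv s (α t) * αv t (α s) = 4 * Real.cos (Real.pi / (M s t : ℝ)) ^ 2)) :
    IsReflectionRep cs α αv ρ := by
  refine ⟨hpair, hρ, fun s t hst => ?_⟩
  obtain ⟨hm, hs, ht⟩ | ⟨hs, ht, hmul⟩ := hM s t hst
  · exact ⟨1, one_pos, by simp [hm, ht, bondWeight_two], by simp [hm, hs, bondWeight_two]⟩
  have hsq : αv s (α t) * αv t (α s) = bondWeight (M s t) ^ 2 := by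
    rw [hmul, bondWeight]
    ring
  have hpos : 0 < bondWeight (M s t) := by
    refine (bondWeight_nonneg (M.off_diagonal s t hst)).lt_of_ne' fun h₀ => ?_
    rw [h₀] at hsq
    exact (mul_pos_of_neg_of_neg hs ht).ne' (by simpa using hsq)
  refine ⟨-αv s (α t) / bondWeight (M s t), div_pos (neg_pos.2 hs) hpos, ?_, ?_⟩
  · field_simp
    linear_combination -hsq
  · field_simp

end CartanCondition

end Pitman

theorem copitman_endpoint_duality_general {B W V : Type*} [Group W] [Finite W] {M : CoxeterMatrix B}
    {cs : CoxeterSystem M W} [AddCommGroup V] [Module ℝ V] {α : B → V} {αv : B → Module.Dual ℝ V}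
    {ρ : W →* (V ≃ₗ[ℝ] V)} {T : ℝ} {π : ℝ → V} (h : Pitman.IsReflectionRep cs α αv ρ) (hT : 0 ≤ T)
    (hπ : Pitman.IsCoordPath αv T π) {l₁ l₂ : List B} (hl₁ : cs.IsReduced l₁)
    (hl₂ : cs.IsReduced l₂) (hl : cs.wordProd l₁ = cs.wordProd l₂)
    (hlongest : ∀ w, cs.length w ≤ cs.length (cs.wordProd l₁)) :
    copitmanWord T α αv l₁ π T = ρ (cs.wordProd l₁) (pitmanWord α αv l₂ π T) := by
  have hleft := Pitman.isLeftDescent_of_forall_length_le hlongest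
  have hright := Pitman.isRightDescent_of_forall_length_le hlongest
  obtain ⟨w, hw⟩ := h.exists_apply_copitmanWord_eq_pitmanWord hl₁ hl₂ hright (hl ▸ hright) hT hπ
  have hE : ∀ s, 0 ≤ αv s (-copitmanWord T α αv l₁ π T) := fun s => by
    rw [← hπ.pitmanWord_reversePath_apply_end hT]
    exact h.coroot_pitmanWord_nonneg hl₁ (hleft s) hT hπ.reversePath
  have hP : ∀ s, 0 ≤ αv s (pitmanWord α αv l₂ π T) := fun s =>
    h.coroot_pitmanWord_nonneg hl₂ (hl ▸ hleft s) hT hπ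
  have horbit : ρ (cs.wordProd l₁ * w) (-copitmanWord T α αv l₁ π T) =
      -ρ (cs.wordProd l₁) (pitmanWord α αv l₂ π T) := by
    rw [map_neg, map_mul, LinearEquiv.mul_apply, hw]
  refine neg_injective ((h.apply_eq_of_dominant (w := cs.wordProd l₁ * w) hE fun s => ?_).symm.trans
    horbit)
  rw [horbit, map_neg, neg_nonneg]
  exact h.coroot_nonpos_of_isLeftDescent hP (hleft s)

/-- Endpoint duality (Proposition 4.4 of Biane–Bougerol–O'Connell): if `W` is finite
with longest element `w₀`, then for every path `π`,
`(E_{w₀} π)(T) = w₀ ((P_{w₀} π)(T))`, where `E_{w₀}` and `P_{w₀}` are computed along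
arbitrary reduced words `l₁`, `l₂` for `w₀` and `w₀` acts on `V` via the reflection
representation `ρ`. -/
theorem copitman_endpoint_duality
    {V : Type*} [NormedAddCommGroup V] [NormedSpace ℝ V] [FiniteDimensional ℝ V]
    (T : ℝ) (hT : 0 < T)
    {B : Type*} [Fintype B] {W : Type*} [Group W] [Finite W]
    (M : CoxeterMatrix B) (cs : CoxeterSystem M W)
    (α : B → V) (αv : B → Module.Dual ℝ V)
    (hpair : ∀ s, αv s (α s) = 2)
    (ρ : W →* (V ≃ₗ[ℝ] V)) (hρinj : Function.Injective ρ)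
    (hρs : ∀ s v, ρ (cs.simple s) v = v - αv s v • α s)
    (hM : ∀ s s' : B, s ≠ s' →
      (M s s' = 2 ∧ αv s (α s') = 0 ∧ αv s' (α s) = 0) ∨
      (αv s (α s') < 0 ∧ αv s' (α s) < 0 ∧
        αv s (α s') * αv s' (α s) = 4 * Real.cos (Real.pi / (M s s' : ℝ)) ^ 2))
    (w₀ : W) (hw₀ : ∀ w : W, cs.length w ≤ cs.length w₀)
    (l₁ l₂ : List B) (hl₁ : cs.wordProd l₁ = w₀) (hl₁red : cs.IsReduced l₁)
    (hl₂ : cs.wordProd l₂ = w₀) (hl₂red : cs.IsReduced l₂)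
    (π : ℝ → V) (hcont : ContinuousOn π (Set.Icc 0 T)) (h0 : π 0 = 0) :
    copitmanWord T α αv l₁ π T = ρ w₀ (pitmanWord α αv l₂ π T) := by
  subst hl₁
  have h := Pitman.isReflectionRep_of_mul_eq_four_mul_cos_sq hpair hρs hM
  have hπ : Pitman.IsCoordPath αv T π :=
    ⟨h0, fun s => (αv s).continuous_of_finiteDimensional.comp_continuousOn hcont⟩
  exact copitman_endpoint_duality_general h hT.le hπ hl₁red hl₂red hl₂.symm hw₀
end

section
/- In the Coxeter setting below, assume W is finite with longest element w_0. Then (−w_0) ∘ P_{w_0} = P_{w_0} ∘ (−w_0) as transformations of continuous paths starting at 0, where (−w_0) acts on a path π pointwise by ((−w_0)π)(t) = −w_0(π(t)). -/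
/-!
`−w₀` permutes the simple roots up to positive scalars: `−w₀ α_s = c_s α_{s*}`, and dually for the
coroots, where `s* = w₀ s w₀⁻¹`. Since the running infimum is positively homogeneous, this gives
`(−w₀) ∘ P_s = P_{s*} ∘ (−w₀)`, hence `(−w₀) ∘ P_l = P_{l*} ∘ (−w₀)` for every word `l`. If `l` is a
reduced word of `w₀` then so is `l*`, and it remains to see that `P_l` depends only on the element
represented by the reduced word `l`. By Matsumoto's theorem this reduces to the braid relations.

For the latter, rescaling the roots makes the pairing symmetric, and a word alternating between
two generators acts on a path by an explicit formula in nested running infima, whose weights are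
values of Chebyshev polynomials at `2 cos (π / m)`. The weight at index `m - 1` vanishes, which
makes the formula for a word of length `m` symmetric in the two generators. The same values are
the coordinates of the roots in a rank-two subsystem; their nonnegativity gives Tits' positivity
of roots, from which both Matsumoto's theorem and the properties of `w₀` are deduced.
-/

open Set

section RunningInf

/-- The running infimum `t ↦ inf_{0 ≤ s ≤ t} f s`. -/
noncomputable def runningInf (f : ℝ → ℝ) (t : ℝ) : ℝ := sInf (f '' Icc 0 t)

theorem runningInf_congr {f g : ℝ → ℝ} {t : ℝ} (h : EqOn f g (Icc 0 t)) :
    runningInf f t = runningInf g t := by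
  rw [runningInf, runningInf, image_congr h]

theorem runningInf_const_mul {c : ℝ} (hc : 0 ≤ c) (f : ℝ → ℝ) (t : ℝ) :
    runningInf (fun s => c * f s) t = c * runningInf f t := by
  rw [runningInf, runningInf, ← smul_eq_mul c, ← Real.sInf_smul_of_nonneg hc, ← image_smul,
    image_image]
  rfl

theorem le_runningInf {f : ℝ → ℝ} {c t : ℝ} (ht : 0 ≤ t) (h : ∀ s ∈ Icc 0 t, c ≤ f s) :
    c ≤ runningInf f t :=
  le_csInf ((nonempty_Icc.2 ht).image f) (forall_mem_image.2 h)

variable {T : ℝ} {f a h : ℝ → ℝ}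

theorem runningInf_le (hf : ContinuousOn f (Icc 0 T)) {s t : ℝ} (hs : 0 ≤ s) (hst : s ≤ t)
    (ht : t ≤ T) : runningInf f t ≤ f s :=
  ContinuousOn.sInf_image_Icc_le (hf.mono (Icc_subset_Icc_right ht)) ⟨hs, hst⟩

theorem exists_runningInf_eq (hf : ContinuousOn f (Icc 0 T)) {t : ℝ} (ht : t ∈ Icc 0 T) :
    ∃ s ∈ Icc 0 t, runningInf f t = f s :=
  isCompact_Icc.exists_sInf_image_eq (nonempty_Icc.2 ht.1)
    (hf.mono (Icc_subset_Icc_right ht.2))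

theorem runningInf_anti (hf : ContinuousOn f (Icc 0 T)) {s t : ℝ} (hs : 0 ≤ s) (hst : s ≤ t)
    (ht : t ≤ T) : runningInf f t ≤ runningInf f s :=
  le_runningInf hs fun _ hr => runningInf_le hf hr.1 (hr.2.trans hst) ht

theorem continuousOn_runningInf (hf : ContinuousOn f (Icc 0 T)) :
    ContinuousOn (runningInf f) (Icc 0 T) := by
  rcases lt_or_ge T 0 with hT | hT
  · simp [Icc_eq_empty_of_lt hT]
  obtain ⟨g, hg, hfg⟩ : ∃ g : ℝ → ℝ, Continuous g ∧ EqOn f g (Icc 0 T) :=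
    ⟨IccExtend hT ((Icc 0 T).domRestrict f), hf.domRestrict.Icc_extend',
      fun s hs => (IccExtend_of_mem hT ((Icc 0 T).domRestrict f) hs).symm⟩
  have hcont : Continuous fun t : ℝ => sInf ((fun r => g (r * t)) '' Icc 0 1) :=
    isCompact_Icc.continuous_sInf (f := fun t r => g (r * t))
      (hg.comp (continuous_snd.mul continuous_fst))
  refine hcont.continuousOn.congr fun t ht => ?_
  have himage : (fun r : ℝ => r * t) '' Icc 0 1 = Icc 0 t := by
    simp [image_mul_right_Icc zero_le_one ht.1]
  rw [runningInf_congr (hfg.mono (Icc_subset_Icc_right ht.2)), runningInf, ← himage, image_image]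

theorem exists_eq_runningInf_of_runningInf_lt (ha : ContinuousOn a (Icc 0 T)) {u t : ℝ}
    (hu : 0 ≤ u) (hut : u ≤ t) (ht : t ≤ T) (hlt : runningInf a t < runningInf a u) :
    ∃ p ∈ Icc u t, a p = runningInf a u ∧ runningInf a p = runningInf a u := by
  have haut : ContinuousOn a (Icc u t) := ha.mono (Icc_subset_Icc hu ht)
  have hau : runningInf a u ≤ a u := runningInf_le ha hu le_rfl (hut.trans ht)
  obtain ⟨v, hv, hav⟩ := exists_runningInf_eq ha ⟨hu.trans hut, ht⟩
  have huv : u ≤ v := by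
    by_contra! hvu
    linarith [runningInf_le ha hv.1 hvu.le (hut.trans ht)]
  have hcross : ∀ q ∈ Icc u t, a q ≤ runningInf a u → ∃ r ∈ Icc u q, a r = runningInf a u :=
    fun q hq haq => intermediate_value_Icc' hq.1 (haut.mono (Icc_subset_Icc_right hq.2))
      ⟨haq, hau⟩
  obtain ⟨r, hr, har⟩ := hcross v ⟨huv, hv.2⟩ (hav ▸ hlt.le)
  obtain ⟨p, ⟨hp, hap⟩, hpmin⟩ : ∃ p, IsLeast (Icc u t ∩ a ⁻¹' {runningInf a u}) p :=
    (isCompact_Icc.of_isClosed_subset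
      (haut.preimage_isClosed_of_isClosed isClosed_Icc isClosed_singleton)
      inter_subset_left).exists_isLeast ⟨r, ⟨hr.1, hr.2.trans hv.2⟩, har⟩
  refine ⟨p, hp, hap, (runningInf_anti ha hu hp.1 (hp.2.trans ht)).antisymm ?_⟩
  refine le_runningInf (hu.trans hp.1) fun q hq => ?_
  rcases le_total q u with hqu | huq
  · exact runningInf_le ha hq.1 hqu (hut.trans ht)
  · by_contra! haq
    obtain ⟨r, hr, har⟩ := hcross q ⟨huq, hq.2.trans hp.2⟩ haq.le
    have hqp : q = p := hq.2.antisymm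
      ((hpmin ⟨⟨hr.1, hr.2.trans (hq.2.trans hp.2)⟩, har⟩).trans hr.2)
    exact haq.ne (hqp ▸ hap)

theorem exists_reflected_le (ha : ContinuousOn a (Icc 0 T)) {u s t : ℝ} (hu : 0 ≤ u)
    (hus : u ≤ s) (hst : s ≤ t) (ht : t ≤ T) :
    ∃ r ∈ Icc u t, a r - 2 * runningInf a r ≤ a s - runningInf a t - runningInf a u := by
  have hanti_ts := runningInf_anti ha (hu.trans hus) hst ht
  have hanti_su := runningInf_anti ha hu hus (hst.trans ht)
  rcases (hanti_ts.trans hanti_su).eq_or_lt with heq | hlt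
  · exact ⟨s, ⟨hus, hst⟩, by linarith⟩
  · obtain ⟨p, hp, hap, hinf⟩ :=
      exists_eq_runningInf_of_runningInf_lt ha hu (hus.trans hst) ht hlt
    have := runningInf_le ha (hu.trans hus) hst ht
    exact ⟨p, hp, by linarith⟩

theorem exists_le_reflected (ha : ContinuousOn a (Icc 0 T)) {u s t : ℝ} (hu : 0 ≤ u)
    (hus : u ≤ s) (hst : s ≤ t) (ht : t ≤ T) :
    ∃ r ∈ Icc u t, a r ≤ runningInf a t + a s - 2 * runningInf a s + runningInf a u := by
  have hanti_su := runningInf_anti ha hu hus (hst.trans ht)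
  have has := runningInf_le ha (hu.trans hus) le_rfl (hst.trans ht)
  obtain ⟨v, hv, hav⟩ := exists_runningInf_eq ha ⟨hu.trans (hus.trans hst), ht⟩
  rcases le_total u v with huv | hvu
  · exact ⟨v, ⟨huv, hv.2⟩, by linarith⟩
  · have := runningInf_le ha hv.1 hvu (hus.trans (hst.trans ht))
    exact ⟨s, ⟨hus, hst⟩, by linarith⟩

theorem runningInf_reflected_add {c : ℝ} (hc : 0 ≤ c) (ha : ContinuousOn a (Icc 0 T))
    (hh : ContinuousOn h (Icc 0 T)) {t : ℝ} (ht : t ∈ Icc 0 T) :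
    c * runningInf a t + runningInf (fun s => c * (a s - 2 * runningInf a s)
        + runningInf (fun u => h u + c * runningInf a u) s) t
      = runningInf (fun s => c * a s + runningInf h s) t := by
  have hinf := continuousOn_runningInf ha
  have hinner : ContinuousOn (fun u => h u + c * runningInf a u) (Icc 0 T) :=
    hh.add (hinf.const_mul c)
  have hleft : ContinuousOn (fun s => c * (a s - 2 * runningInf a s)
      + runningInf (fun u => h u + c * runningInf a u) s) (Icc 0 T) :=
    ((ha.sub (hinf.const_mul 2)).const_mul c).add (continuousOn_runningInf hinner)
  have hright : ContinuousOn (fun s => c * a s + runningInf h s) (Icc 0 T) :=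
    (ha.const_mul c).add (continuousOn_runningInf hh)
  apply le_antisymm
  · obtain ⟨s, hs, hmin⟩ := exists_runningInf_eq hright ht
    obtain ⟨u, hu, hmin'⟩ := exists_runningInf_eq hh ⟨hs.1, hs.2.trans ht.2⟩
    obtain ⟨r, hr, har⟩ := exists_reflected_le ha hu.1 hu.2 hs.2 ht.2
    have hle := runningInf_le hleft (hu.1.trans hr.1) hr.2 ht.2
    have hle' := runningInf_le hinner hu.1 hr.1 (hr.2.trans ht.2)
    linarith [mul_le_mul_of_nonneg_left har hc]
  · obtain ⟨s, hs, hmin⟩ := exists_runningInf_eq hleft ht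
    obtain ⟨u, hu, hmin'⟩ := exists_runningInf_eq hinner ⟨hs.1, hs.2.trans ht.2⟩
    obtain ⟨r, hr, har⟩ := exists_le_reflected ha hu.1 hu.2 hs.2 ht.2
    have hle := runningInf_le hright (hu.1.trans hr.1) hr.2 ht.2
    have hle' := runningInf_le hh hu.1 hr.1 (hr.2.trans ht.2)
    linarith [mul_le_mul_of_nonneg_left har hc]

end RunningInf

section NestedInf

/-- The nested infimum
`inf_{t ≥ s₀ ≥ s₁ ≥ ⋯ ≥ s_{n-1} ≥ 0} (u 0 * a s₀ + u 1 * b s₁ + u 2 * a s₂ + u 3 * b s₃ + ⋯)`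
of `n` alternating terms, in which alternating words of Pitman transforms are expressed. -/
noncomputable def nestedInf : ℕ → (ℕ → ℝ) → (ℝ → ℝ) → (ℝ → ℝ) → ℝ → ℝ
  | 0, _, _, _ => fun _ => 0
  | n + 1, u, a, b => runningInf fun s => u 0 * a s + nestedInf n (fun k => u (k + 1)) b a s

theorem nestedInf_succ (n : ℕ) (u : ℕ → ℝ) (a b : ℝ → ℝ) :
    nestedInf (n + 1) u a b =
      runningInf fun s => u 0 * a s + nestedInf n (fun k => u (k + 1)) b a s :=
  rfl

theorem nestedInf_one {u : ℕ → ℝ} (hu : 0 ≤ u 0) (a b : ℝ → ℝ) (t : ℝ) :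
    nestedInf 1 u a b t = u 0 * runningInf a t := by
  simp only [nestedInf, add_zero, runningInf_const_mul hu]

theorem nestedInf_succ_eq_of_eq_zero {n : ℕ} {u : ℕ → ℝ} (hu : u n = 0) (a b : ℝ → ℝ) :
    nestedInf (n + 1) u a b = nestedInf n u a b := by
  induction n generalizing u a b with
  | zero =>
    funext t
    rw [nestedInf_one hu.ge, hu, zero_mul, nestedInf]
  | succ n ih => rw [nestedInf_succ, ih hu, ← nestedInf_succ]

variable {T p : ℝ} {u : ℕ → ℝ} {a b : ℝ → ℝ}

theorem continuousOn_nestedInf (n : ℕ) (ha : ContinuousOn a (Icc 0 T))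
    (hb : ContinuousOn b (Icc 0 T)) : ContinuousOn (nestedInf n u a b) (Icc 0 T) := by
  induction n generalizing u a b with
  | zero => exact continuousOn_const
  | succ n ih => exact continuousOn_runningInf ((ha.const_mul (u 0)).add (ih hb ha))

theorem mul_runningInf_add_nestedInf_even (hrec : ∀ n, u n + u (n + 2) = p * u (n + 1)) {k : ℕ}
    (hu : ∀ n ≤ 2 * k, 0 ≤ u n) (ha : ContinuousOn a (Icc 0 T)) (hb : ContinuousOn b (Icc 0 T))
    {t : ℝ} (ht : t ∈ Icc 0 T) :
    u 0 * runningInf a t + nestedInf (2 * k) u (fun s => a s - 2 * runningInf a s)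
        (fun s => b s + p * runningInf a s) t = nestedInf (2 * k + 1) u a b t := by
  induction k generalizing u t with
  | zero => rw [nestedInf_one (hu 0 le_rfl), mul_zero, nestedInf, add_zero]
  | succ k ih =>
    have hinner : ContinuousOn
        (fun s => u 1 * b s + nestedInf (2 * k + 1) (fun n => u (n + 2)) a b s) (Icc 0 T) :=
      (hb.const_mul (u 1)).add (continuousOn_nestedInf _ ha hb)
    have hih : ∀ s ∈ Icc 0 T, u 1 * (b s + p * runningInf a s)
          + nestedInf (2 * k) (fun n => u (n + 2)) (fun s => a s - 2 * runningInf a s)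
              (fun s => b s + p * runningInf a s) s
        = u 1 * b s + nestedInf (2 * k + 1) (fun n => u (n + 2)) a b s
          + u 0 * runningInf a s := fun s hs => by
      have := ih (fun n => hrec (n + 2)) (fun n hn => hu (n + 2) (by lia)) hs
      linear_combination this - runningInf a s * hrec 0
    have hreflect := runningInf_reflected_add (hu 0 (Nat.zero_le _)) ha hinner ht
    rw [mul_add_one, nestedInf_succ, nestedInf_succ, nestedInf_succ (2 * k + 1 + 1),
      nestedInf_succ (2 * k + 1), ← hreflect]
    congr 1
    refine runningInf_congr fun s hs => ?_
    congr 1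
    exact runningInf_congr fun r hr => hih r ⟨hr.1, hr.2.trans (hs.2.trans ht.2)⟩

theorem nestedInf_odd_reflected (hrec : ∀ n, u n + u (n + 2) = p * u (n + 1)) (h1 : u 1 = p * u 0)
    {k : ℕ} (hu : ∀ n ≤ 2 * k + 1, 0 ≤ u n) (ha : ContinuousOn a (Icc 0 T))
    (hb : ContinuousOn b (Icc 0 T)) {t : ℝ} (ht : t ∈ Icc 0 T) :
    nestedInf (2 * k + 1) u (fun s => b s + p * runningInf a s)
        (fun s => a s - 2 * runningInf a s) t = nestedInf (2 * k + 2) u b a t := by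
  rw [nestedInf_succ, nestedInf_succ]
  refine runningInf_congr fun s hs => ?_
  have := mul_runningInf_add_nestedInf_even (k := k) (fun n => hrec (n + 1))
    (fun n hn => hu (n + 1) (by lia)) ha hb ⟨hs.1, hs.2.trans ht.2⟩
  simp only [zero_add] at this
  linear_combination this - runningInf a s * h1

end NestedInf

section PitmanWord

open CoxeterSystem

variable {V B : Type*} [AddCommGroup V] [Module ℝ V]

theorem pitman_apply (α : V) (αv : Module.Dual ℝ V) (π : ℝ → V) (t : ℝ) :
    pitman α αv π t = π t - runningInf (fun s => αv (π s)) t • α :=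
  rfl

theorem pitman_smul_inv_smul {c : ℝ} (hc : 0 < c) (α : V) (αv : Module.Dual ℝ V) :
    pitman (c • α) (c⁻¹ • αv) = pitman α αv := by
  funext π t
  simp only [pitman_apply, LinearMap.smul_apply, smul_eq_mul,
    runningInf_const_mul (inv_nonneg.2 hc.le), smul_smul, mul_right_comm, inv_mul_cancel₀ hc.ne',
    one_mul]

theorem pitman_eqOn {T : ℝ} {π π' : ℝ → V} (α : V) (αv : Module.Dual ℝ V)
    (h : EqOn π π' (Icc 0 T)) : EqOn (pitman α αv π) (pitman α αv π') (Icc 0 T) := fun t ht => by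
  rw [pitman_apply, pitman_apply, h ht,
    runningInf_congr fun s hs => congrArg αv (h ⟨hs.1, hs.2.trans ht.2⟩)]

variable (α : B → V) (αv : B → Module.Dual ℝ V) {T : ℝ} {π π' : ℝ → V}

theorem pitmanWord_cons (s : B) (l : List B) :
    pitmanWord α αv (s :: l) = pitman (α s) (αv s) ∘ pitmanWord α αv l :=
  rfl

theorem pitmanWord_append (l₁ l₂ : List B) :
    pitmanWord α αv (l₁ ++ l₂) = pitmanWord α αv l₁ ∘ pitmanWord α αv l₂ := by
  induction l₁ with
  | nil => rfl
  | cons s l ih => rw [List.cons_append, pitmanWord_cons, pitmanWord_cons, ih, Function.comp_assoc]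

theorem pitmanWord_smul_inv_smul {c : B → ℝ} (hc : ∀ s, 0 < c s) (l : List B) :
    pitmanWord (fun s => c s • α s) (fun s => (c s)⁻¹ • αv s) l = pitmanWord α αv l := by
  induction l with
  | nil => rfl
  | cons s l ih => rw [pitmanWord_cons, pitmanWord_cons, pitman_smul_inv_smul (hc s), ih]

theorem pitmanWord_eqOn (h : EqOn π π' (Icc 0 T)) (l : List B) :
    EqOn (pitmanWord α αv l π) (pitmanWord α αv l π') (Icc 0 T) := by
  induction l with
  | nil => exact h
  | cons s l ih => exact pitman_eqOn (α s) (αv s) ih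

/-- Continuity of a path in the directions of the coroots `αv`. Pitman transforms see a path only
through these coordinates, so that no topology on `V` is needed. -/
def CorootContinuousOn (αv : B → Module.Dual ℝ V) (π : ℝ → V) (I : Set ℝ) : Prop :=
  ∀ s, ContinuousOn (fun t => αv s (π t)) I

variable {α αv}

theorem CorootContinuousOn.pitmanWord (hπ : CorootContinuousOn αv π (Icc 0 T)) (l : List B) :
    CorootContinuousOn αv (pitmanWord α αv l π) (Icc 0 T) := by
  induction l with
  | nil => exact hπ
  | cons s l ih =>
    intro t
    simp only [pitmanWord_cons, Function.comp_apply, pitman_apply, map_sub, map_smul, smul_eq_mul]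
    exact (ih t).sub ((continuousOn_runningInf (ih s)).mul_const _)

theorem coroot_pitman_self {α : V} {αv : Module.Dual ℝ V} (h : αv α = 2) (π : ℝ → V) :
    (fun t => αv (pitman α αv π t)) =
      fun t => αv (π t) - 2 * runningInf (fun s => αv (π s)) t := by
  funext t
  rw [pitman_apply, map_sub, map_smul, smul_eq_mul, h, mul_comm]

theorem coroot_pitman_of_eq_neg {p : ℝ} {α : V} {βv : Module.Dual ℝ V} (h : βv α = -p)
    (αv : Module.Dual ℝ V) (π : ℝ → V) :
    (fun t => βv (pitman α αv π t)) =
      fun t => βv (π t) + p * runningInf (fun s => αv (π s)) t := by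
  funext t
  rw [pitman_apply, map_sub, map_smul, smul_eq_mul, h]
  ring

variable {i j : B} {p : ℝ} {u : ℕ → ℝ}

theorem ite_even_alternatingWord_succ (i j : B) (n : ℕ) :
    (if Even (n + 1) then alternatingWord j i (n + 2) else alternatingWord i j (n + 2)) =
      (if Even n then alternatingWord j i (n + 1) else alternatingWord i j (n + 1)) ++
        [if Even n then j else i] := by
  by_cases hn : Even n <;>
    simp [hn, Nat.even_add_one, alternatingWord_succ _ _ (n + 1), List.concat_eq_append]

/-- The words of length `n + 1` alternating between `i` and `j` are `alternatingWord j i (n + 1)`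
and `alternatingWord i j (n + 1)`; the parity of `n` selects the one whose first letter is `i`. -/
theorem pitmanWord_alternatingWord
    (hi : αv i (α i) = 2) (hj : αv j (α j) = 2) (hij : αv i (α j) = -p) (hji : αv j (α i) = -p)
    (hu0 : u 0 = 1) (hu1 : u 1 = p) (hrec : ∀ n, u n + u (n + 2) = p * u (n + 1)) {n : ℕ}
    (hu : ∀ k ≤ n, 0 ≤ u k) (hπi : ContinuousOn (fun s => αv i (π s)) (Icc 0 T))
    (hπj : ContinuousOn (fun s => αv j (π s)) (Icc 0 T)) {t : ℝ} (ht : t ∈ Icc 0 T) :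
    pitmanWord α αv (if Even n then alternatingWord j i (n + 1) else alternatingWord i j (n + 1))
        π t
      = π t - nestedInf (n + 1) u (fun s => αv i (π s)) (fun s => αv j (π s)) t • α i
        - nestedInf n u (fun s => αv j (π s)) (fun s => αv i (π s)) t • α j := by
  have h1 : u 1 = p * u 0 := by rw [hu0, hu1, mul_one]
  induction n generalizing π with
  | zero =>
    rw [nestedInf_one (hu 0 le_rfl), hu0, one_mul, nestedInf]
    simp [alternatingWord, pitmanWord, pitman_apply]
  | succ n ih =>
    rw [ite_even_alternatingWord_succ, pitmanWord_append, Function.comp_apply]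
    have hinfi := continuousOn_runningInf hπi
    have hinfj := continuousOn_runningInf hπj
    rcases Nat.even_or_odd' n with ⟨k, rfl | rfl⟩
    · have hx : pitmanWord α αv [if Even (2 * k) then j else i] π = pitman (α j) (αv j) π := by
        simp [pitmanWord]
      have hself := coroot_pitman_self hj π
      have hother := coroot_pitman_of_eq_neg hij (αv j) π
      rw [hx, ih (fun k hk => hu k (by lia))
          (hother ▸ hπi.add (hinfj.const_mul p)) (hself ▸ hπj.sub (hinfj.const_mul 2)),
        hself, hother, pitman_apply, nestedInf_odd_reflected hrec h1 hu hπj hπi ht,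
        ← mul_runningInf_add_nestedInf_even hrec (fun k hk => hu k (by lia)) hπj hπi ht, hu0]
      module
    · have hx : pitmanWord α αv [if Even (2 * k + 1) then j else i] π
          = pitman (α i) (αv i) π := by
        simp [pitmanWord]
      have hself := coroot_pitman_self hi π
      have hother := coroot_pitman_of_eq_neg hji (αv i) π
      rw [hx, ih (fun k hk => hu k (by lia)) (hself ▸ hπi.sub (hinfi.const_mul 2))
          (hother ▸ hπj.add (hinfi.const_mul p)),
        hself, hother, pitman_apply,
        nestedInf_odd_reflected hrec h1 (fun k hk => hu k (by lia)) hπi hπj ht,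
        show 2 * k + 1 + 1 + 1 = 2 * (k + 1) + 1 from rfl,
        ← mul_runningInf_add_nestedInf_even hrec hu hπi hπj ht, hu0]
      module

end PitmanWord

section ChebyshevWeights

open Polynomial.Chebyshev

theorem eval_S_two_mul_cos_pi_div_nonneg {m n : ℕ} (hm : m ≠ 1) (hn : m ≠ 0 → n < m) :
    0 ≤ (S ℝ n).eval (2 * Real.cos (Real.pi / m)) := by
  rcases eq_or_ne m 0 with rfl | hm0
  · simp only [Nat.cast_zero, div_zero, Real.cos_zero, mul_one, S_eval_two]
    positivity
  have hm2 : (2 : ℝ) ≤ m := by exact_mod_cast (by lia : 2 ≤ m)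
  have hsin : 0 < Real.sin (Real.pi / m) :=
    Real.sin_pos_of_pos_of_lt_pi (by positivity) (div_lt_self Real.pi_pos (by linarith))
  refine nonneg_of_mul_nonneg_left ?_ hsin
  rw [S_two_mul_real_cos]
  have hle : ((n : ℤ) + 1 : ℝ) / m ≤ 1 :=
    (div_le_one (by linarith)).2 (by exact_mod_cast hn hm0)
  refine Real.sin_nonneg_of_nonneg_of_le_pi (by positivity) ?_
  calc ((n : ℤ) + 1 : ℝ) * (Real.pi / m) = ((n : ℤ) + 1 : ℝ) / m * Real.pi := by ring
    _ ≤ Real.pi := mul_le_of_le_one_left Real.pi_pos.le hle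

theorem eval_S_two_mul_cos_pi_div_eq_zero {m n : ℕ} (hn : n ≠ 0) (hm : m = n + 1) :
    (S ℝ n).eval (2 * Real.cos (Real.pi / m)) = 0 := by
  have hn1 : (1 : ℝ) < (n : ℝ) + 1 := by simpa using Nat.pos_of_ne_zero hn
  subst hm
  have hsin : 0 < Real.sin (Real.pi / (n + 1 : ℕ)) :=
    Real.sin_pos_of_pos_of_lt_pi (by positivity) (div_lt_self Real.pi_pos (by exact_mod_cast hn1))
  refine (mul_eq_zero.1 ?_).resolve_right hsin.ne'
  rw [S_two_mul_real_cos, Int.cast_natCast, Nat.cast_succ, mul_div_cancel₀ _ (by positivity),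
    Real.sin_pi]

theorem eval_S_add_eval_S_add_two (x : ℝ) (n : ℕ) :
    (S ℝ n).eval x + (S ℝ (n + 2 : ℕ)).eval x = x * (S ℝ (n + 1 : ℕ)).eval x := by
  push_cast
  simp [S_add_two]

end ChebyshevWeights

section CartanMatrix

variable {B : Type*}

/-- `A` is a generalized Cartan matrix of Coxeter type `M`: the entry `A s t` stands for the value
`α_s∨(α_t)` of a simple coroot on a simple root. Since `π / 0 = 0`, the last condition reads
`A s t * A t s = 4` when `M s t = 0`, that is, when `m(s, t) = ∞`. -/
structure IsCartanMatrix (M : CoxeterMatrix B) (A : B → B → ℝ) : Prop where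
  diag : ∀ s, A s s = 2
  nonpos : ∀ s t, s ≠ t → A s t ≤ 0
  eq_zero_symm : ∀ s t, s ≠ t → A s t = 0 → A t s = 0
  mul_symm : ∀ s t, s ≠ t → A s t * A t s = 4 * Real.cos (Real.pi / M s t) ^ 2

theorem cos_pi_div_nonneg {m : ℕ} (hm : m ≠ 1) : 0 ≤ Real.cos (Real.pi / m) := by
  have := eval_S_two_mul_cos_pi_div_nonneg (n := 1) hm (by lia)
  simpa using this

theorem isCartanMatrix_neg_two_mul_cos (M : CoxeterMatrix B) :
    IsCartanMatrix M fun s t => -2 * Real.cos (Real.pi / M s t) where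
  diag s := by simp
  nonpos s t hst := by linarith [cos_pi_div_nonneg (M.off_diagonal s t hst)]
  eq_zero_symm s t _ h := by rwa [M.symmetric t s]
  mul_symm s t _ := by
    rw [M.symmetric t s]
    ring

theorem isCartanMatrix_of_pairing {V : Type*} [AddCommGroup V] [Module ℝ V] {M : CoxeterMatrix B}
    {α : B → V} {αv : B → Module.Dual ℝ V} (hpair : ∀ s, αv s (α s) = 2)
    (hM : ∀ s t, s ≠ t →
      (M s t = 2 ∧ αv s (α t) = 0 ∧ αv t (α s) = 0) ∨
      (αv s (α t) < 0 ∧ αv t (α s) < 0 ∧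
        αv s (α t) * αv t (α s) = 4 * Real.cos (Real.pi / M s t) ^ 2)) :
    IsCartanMatrix M fun s t => αv s (α t) where
  diag := hpair
  nonpos s t hst := by
    rcases hM s t hst with ⟨-, h, -⟩ | ⟨h, -, -⟩
    exacts [h.le, h.le]
  eq_zero_symm s t hst h := by
    rcases hM s t hst with ⟨-, -, h'⟩ | ⟨h', -, -⟩
    exacts [h', absurd h h'.ne]
  mul_symm s t hst := by
    rcases hM s t hst with ⟨hMst, h, -⟩ | ⟨-, -, h⟩
    · simp [hMst, h]
    · exact h

theorem IsCartanMatrix.exists_scale {M : CoxeterMatrix B} {A : B → B → ℝ}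
    (hA : IsCartanMatrix M A) {s t : B} (hst : s ≠ t) :
    ∃ c : ℝ, 0 < c ∧ A s t = -(2 * Real.cos (Real.pi / M s t)) * c ∧
      A t s = -(2 * Real.cos (Real.pi / M s t)) * c⁻¹ := by
  have hmul := hA.mul_symm s t hst
  rcases (cos_pi_div_nonneg (M.off_diagonal s t hst)).eq_or_lt with hcos | hcos
  · have hzero : A s t = 0 ∧ A t s = 0 := by
      rw [← hcos, zero_pow two_ne_zero, mul_zero] at hmul
      rcases mul_eq_zero.1 hmul with h | h
      · exact ⟨h, hA.eq_zero_symm s t hst h⟩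
      · exact ⟨hA.eq_zero_symm t s hst.symm h, h⟩
    exact ⟨1, one_pos, by simp [hzero.1, ← hcos], by simp [hzero.2, ← hcos]⟩
  · have hne : A s t ≠ 0 := by
      rintro h
      rw [h, zero_mul] at hmul
      exact hmul.not_lt (by positivity)
    have hneg : A s t < 0 := (hA.nonpos s t hst).lt_of_ne hne
    refine ⟨-A s t / (2 * Real.cos (Real.pi / M s t)), div_pos (by linarith) (by linarith), ?_, ?_⟩
    · field_simp
    · field_simp
      linarith

end CartanMatrix

section PitmanBraid

open CoxeterSystem Polynomial.Chebyshev

variable {V B : Type*} [AddCommGroup V] [Module ℝ V] {α : B → V} {αv : B → Module.Dual ℝ V}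
  {T : ℝ} {π : ℝ → V}

theorem pitmanWord_alternatingWord_swap {i j : B} {p : ℝ} {u : ℕ → ℝ}
    (hi : αv i (α i) = 2) (hj : αv j (α j) = 2) (hij : αv i (α j) = -p) (hji : αv j (α i) = -p)
    (hu0 : u 0 = 1) (hu1 : u 1 = p) (hrec : ∀ n, u n + u (n + 2) = p * u (n + 1)) {n : ℕ}
    (hu : ∀ k ≤ n, 0 ≤ u k) (hun : u n = 0) (hπi : ContinuousOn (fun s => αv i (π s)) (Icc 0 T))
    (hπj : ContinuousOn (fun s => αv j (π s)) (Icc 0 T)) :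
    EqOn (pitmanWord α αv (alternatingWord i j (n + 1)) π)
      (pitmanWord α αv (alternatingWord j i (n + 1)) π) (Icc 0 T) := by
  intro t ht
  have hformula_i := pitmanWord_alternatingWord hi hj hij hji hu0 hu1 hrec hu hπi hπj ht
  have hformula_j := pitmanWord_alternatingWord hj hi hji hij hu0 hu1 hrec hu hπj hπi ht
  rw [nestedInf_succ_eq_of_eq_zero hun] at hformula_i hformula_j
  split_ifs at hformula_i hformula_j
  all_goals rw [hformula_i, hformula_j, sub_right_comm]

variable {M : CoxeterMatrix B}

theorem pitmanWord_braidWord (hA : IsCartanMatrix M fun s t => αv s (α t))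
    (hπ : CorootContinuousOn αv π (Icc 0 T)) (i j : B) :
    EqOn (pitmanWord α αv (braidWord M i j) π) (pitmanWord α αv (braidWord M j i) π)
      (Icc 0 T) := by
  classical
  rcases eq_or_ne i j with rfl | hij
  · exact eqOn_refl _ _
  unfold braidWord
  rw [M.symmetric j i]
  have hM1 := M.off_diagonal i j hij
  rcases hn : M i j with _ | n
  · simp [alternatingWord, eqOn_refl]
  obtain ⟨c, hc, hcij, hcji⟩ := hA.exists_scale hij
  let d : B → ℝ := Function.update 1 i c
  have hd : ∀ s, 0 < d s := fun s => by
    rcases eq_or_ne s i with rfl | hs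
    · simpa [d] using hc
    · simp [d, hs]
  rw [← pitmanWord_smul_inv_smul α αv hd, ← pitmanWord_smul_inv_smul α αv hd]
  refine pitmanWord_alternatingWord_swap (p := 2 * Real.cos (Real.pi / M i j))
    (u := fun k => (S ℝ k).eval (2 * Real.cos (Real.pi / M i j))) ?_ ?_ ?_ ?_
    (by simp) (by simp) (eval_S_add_eval_S_add_two _) (fun k hk =>
      eval_S_two_mul_cos_pi_div_nonneg hM1 (by lia))
    (eval_S_two_mul_cos_pi_div_eq_zero (by lia) hn)
    ((hπ i).const_mul _) ((hπ j).const_mul _)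
  · simp [d, hA.diag i, hc.ne']
  · simp [d, hA.diag j, hij.symm]
  · simp [d, hij.symm, hcij, hc.ne', mul_comm]
  · simp [d, hij.symm, hcji, hc.ne', mul_comm]

end PitmanBraid

section ReflectionRepresentation

open Polynomial.Chebyshev

variable {B V : Type*} [AddCommGroup V] [Module ℝ V] {M : CoxeterMatrix B}
  {α : B → V} {αv : B → Module.Dual ℝ V}

theorem eval_S_add_eval_S_sub_one_eq_zero {k : ℕ} (hk : k ≠ 0) :
    (S ℝ k).eval (2 * Real.cos (2 * Real.pi / (2 * k + 1)))
      + (S ℝ (k - 1)).eval (2 * Real.cos (2 * Real.pi / (2 * k + 1))) = 0 := by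
  have hk1 : (1 : ℝ) ≤ k := by exact_mod_cast Nat.one_le_iff_ne_zero.2 hk
  set θ := 2 * Real.pi / (2 * (k : ℝ) + 1) with hθ
  have hsin : 0 < Real.sin θ := Real.sin_pos_of_pos_of_lt_pi (by positivity) <| by
    rw [hθ, div_lt_iff₀ (by positivity)]
    nlinarith [Real.pi_pos]
  have hsymm : (k : ℝ) * θ = 2 * Real.pi - (k + 1) * θ := by
    rw [hθ]
    field_simp
    ring
  refine (mul_eq_zero.1 ?_).resolve_right hsin.ne'
  rw [add_mul, S_two_mul_real_cos, S_two_mul_real_cos]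
  push_cast
  rw [sub_add_cancel, hsymm, Real.sin_two_pi_sub, add_neg_cancel]

theorem two_mul_cos_two_pi_div {m : ℕ} :
    2 * Real.cos (2 * Real.pi / m) = 4 * Real.cos (Real.pi / m) ^ 2 - 2 := by
  rw [mul_div_assoc, Real.cos_two_mul]
  ring

theorem reflection_mul_reflection_pow_eq_one {x y : V} {f g : Module.Dual ℝ V} (hx : f x = 2)
    (hy : g y = 2) {m : ℕ} (hm : m ≠ 1) (hzero : f y = 0 ↔ g x = 0)
    (hmul : f y * g x = 4 * Real.cos (Real.pi / m) ^ 2) :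
    (Module.reflection hx * Module.reflection hy) ^ m = 1 := by
  have ht : 2 * Real.cos (2 * Real.pi / m) = f y * g x - 2 := by
    rw [hmul, two_mul_cos_two_pi_div]
  refine LinearEquiv.ext fun z => ?_
  rw [Module.reflection_mul_reflection_pow_apply hx hy m z _ ht, LinearEquiv.coe_one, id_eq]
  obtain rfl | rfl | ⟨n, rfl⟩ | ⟨n, rfl⟩ : m = 0 ∨ m = 2 ∨ (∃ n, m = 2 * (n + 2)) ∨
      ∃ n, m = 2 * (n + 1) + 1 := by
    rcases Nat.even_or_odd' m with ⟨k, rfl | rfl⟩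
    · rcases k with _ | _ | k <;> simp
    · rcases k with _ | k <;> simp at hm ⊢
  · simp
  · have hmul0 : f y * g x = 0 := hmul.trans (by simp)
    have hfy : f y = 0 := (mul_eq_zero.1 hmul0).elim id hzero.2
    have hgx : g x = 0 := hzero.1 hfy
    rw [ht, hmul0, hfy, hgx]
    simp only [Nat.cast_ofNat, Int.reduceSub, Int.reduceDiv, S_zero, S_one, S_neg_one,
      Polynomial.eval_one, Polynomial.eval_X, Polynomial.eval_zero]
    module
  · have hindex : (((2 * (n + 2) : ℕ) : ℤ) - 2) / 2 = (n + 1 : ℕ) ∧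
        (((2 * (n + 2) : ℕ) : ℤ) - 1) / 2 = (n + 1 : ℕ) := by lia
    have hcast : 2 * Real.pi / (2 * (n + 2) : ℕ) = Real.pi / (n + 2 : ℕ) := by
      rw [Nat.cast_mul, Nat.cast_two, mul_div_mul_left _ _ two_ne_zero]
    rw [hindex.1, hindex.2, hcast, eval_S_two_mul_cos_pi_div_eq_zero n.succ_ne_zero rfl]
    simp only [zero_mul, zero_smul, add_zero]
  · have hS := eval_S_add_eval_S_sub_one_eq_zero n.succ_ne_zero
    have hindex : (((2 * (n + 1) + 1 : ℕ) : ℤ) - 1) / 2 = (n + 1 : ℕ) ∧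
        (((2 * (n + 1) + 1 : ℕ) : ℤ) - 3) / 2 = (n + 1 : ℕ) - 1 ∧
        ((2 * (n + 1) + 1 : ℕ) : ℤ) / 2 = (n + 1 : ℕ) ∧
        (((2 * (n + 1) + 1 : ℕ) : ℤ) - 2) / 2 = (n + 1 : ℕ) - 1 := by lia
    have hcast : ((2 * (n + 1) + 1 : ℕ) : ℝ) = 2 * (n + 1 : ℕ) + 1 := by push_cast; ring
    rw [hindex.1, hindex.2.1, hindex.2.2.1, hindex.2.2.2, hcast, hS]
    simp only [mul_zero, zero_smul, add_zero]

theorem isLiftable_reflection (hA : IsCartanMatrix M fun s t => αv s (α t)) :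
    M.IsLiftable fun s => Module.reflection (hA.diag s) := by
  intro s t
  rcases eq_or_ne s t with rfl | hst
  · rw [M.diagonal, pow_one]
    exact inv_mul_cancel (Module.reflection (hA.diag s))
  · exact reflection_mul_reflection_pow_eq_one _ _ (M.off_diagonal s t hst)
      ⟨hA.eq_zero_symm s t hst, hA.eq_zero_symm t s hst.symm⟩ (hA.mul_symm s t hst)

variable {W : Type*} [Group W] (cs : CoxeterSystem M W)

/-- The reflection representation attached to simple roots `α` and coroots `αv` whose pairings form
a Cartan matrix. -/
noncomputable def reflectionRep (hA : IsCartanMatrix M fun s t => αv s (α t)) :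
    W →* (V ≃ₗ[ℝ] V) :=
  cs.lift ⟨_, isLiftable_reflection hA⟩

theorem reflectionRep_simple (hA : IsCartanMatrix M fun s t => αv s (α t)) (s : B) (v : V) :
    reflectionRep cs hA (cs.simple s) v = v - αv s v • α s := by
  rw [reflectionRep, CoxeterSystem.lift_apply_simple, Module.reflection_apply]

end ReflectionRepresentation

section AlternatingFactorization

open CoxeterSystem

variable {B W : Type*} [Group W] {M : CoxeterMatrix B} {cs : CoxeterSystem M W} {s t : B}
  {v w : W} {k m : ℕ}

/-- A length-additive factorization of `w` as `v` times the product of the word of length `k` that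
alternates between `s` and `t` and ends in `t`. -/
def IsAlternatingFactorization (cs : CoxeterSystem M W) (s t : B) (k : ℕ) (v w : W) : Prop :=
  w = v * cs.wordProd (alternatingWord s t k) ∧ cs.length w = cs.length v + k

namespace IsAlternatingFactorization

theorem zero (w : W) : IsAlternatingFactorization cs s t 0 w w := by
  simp [IsAlternatingFactorization, alternatingWord]

theorem succ_iff : IsAlternatingFactorization cs s t (k + 1) v w ↔
    IsAlternatingFactorization cs s t k (v * cs.simple (if Even k then t else s)) w ∧
      ¬cs.IsRightDescent v (if Even k then t else s) := by
  set x := if Even k then t else s with hx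
  rw [IsAlternatingFactorization, IsAlternatingFactorization, alternatingWord_succ', ← hx,
    wordProd_cons, ← mul_assoc, not_isRightDescent_iff]
  constructor
  · rintro ⟨hw, hlen⟩
    have hle := cs.length_mul_le (v * cs.simple x) (cs.wordProd (alternatingWord s t k))
    have halt := cs.length_wordProd_le (alternatingWord s t k)
    rw [← hw] at hle
    rw [length_alternatingWord] at halt
    have hvx : cs.length (v * cs.simple x) = cs.length v + 1 := by
      rcases cs.length_mul_simple v x with h | h <;> lia
    exact ⟨⟨hw, by lia⟩, hvx⟩
  · rintro ⟨⟨hw, hlen⟩, hvx⟩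
    exact ⟨hw, by lia⟩

theorem exists_of_le (h : IsAlternatingFactorization cs s t k v w) (hmk : m ≤ k) :
    ∃ v', IsAlternatingFactorization cs s t m v' w := by
  induction k, hmk using Nat.le_induction generalizing v with
  | base => exact ⟨v, h⟩
  | succ k _ ih => exact ih (succ_iff.1 h).1

theorem isRightDescent (h : IsAlternatingFactorization cs s t k v w) (hk : k ≠ 0) :
    cs.IsRightDescent w t := by
  obtain ⟨n, rfl⟩ := Nat.exists_eq_succ_of_ne_zero hk
  obtain ⟨hw, hlen⟩ := h
  rw [alternatingWord_succ, wordProd_concat, ← mul_assoc] at hw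
  have hwt : w * cs.simple t = v * cs.wordProd (alternatingWord t s n) := by
    rw [hw, simple_mul_simple_cancel_right]
  have hle := cs.length_mul_le v (cs.wordProd (alternatingWord t s n))
  have halt := cs.length_wordProd_le (alternatingWord t s n)
  rw [length_alternatingWord] at halt
  rw [IsRightDescent, hwt]
  lia

theorem symm (h : IsAlternatingFactorization cs s t (M s t) v w) :
    IsAlternatingFactorization cs t s (M t s) v w := by
  have hbraid : cs.wordProd (alternatingWord s t (M s t)) =
      cs.wordProd (alternatingWord t s (M t s)) := cs.wordProd_braidWord_eq s t
  exact ⟨hbraid ▸ h.1, M.symmetric s t ▸ h.2⟩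

theorem exists_maximal (h : cs.IsRightDescent w t) (s : B) :
    ∃ k v, k ≠ 0 ∧ IsAlternatingFactorization cs s t k v w ∧
      ¬cs.IsRightDescent v s ∧ ¬cs.IsRightDescent v t := by
  classical
  let P : ℕ → Prop := fun k => ∃ v, IsAlternatingFactorization cs s t k v w
  have hbound : ∀ k, P k → k ≤ cs.length w := fun k ⟨v, hv⟩ => hv.2 ▸ Nat.le_add_left k _
  have hone : P 1 := ⟨w * cs.simple t, succ_iff.2 ⟨by simpa using zero w,
    by simpa using cs.isRightDescent_iff_not_isRightDescent_mul.1 h⟩⟩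
  obtain ⟨v, hv⟩ : P (Nat.findGreatest P (cs.length w)) :=
    Nat.findGreatest_spec (hbound 1 hone) hone
  have hmax : ∀ k, P k → k ≤ Nat.findGreatest P (cs.length w) := fun k hk =>
    Nat.le_findGreatest (hbound k hk) hk
  generalize Nat.findGreatest P (cs.length w) = k at hv hmax
  obtain ⟨n, rfl⟩ := Nat.exists_eq_succ_of_ne_zero (Nat.one_le_iff_ne_zero.1 (hmax 1 hone))
  have hlast := (succ_iff.1 hv).2
  have hnext : ¬cs.IsRightDescent v (if Even (n + 1) then t else s) := fun hdesc =>
    (hmax (n + 2) ⟨_, succ_iff.2 ⟨by rwa [simple_mul_simple_cancel_right],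
      cs.isRightDescent_iff_not_isRightDescent_mul.1 hdesc⟩⟩).not_gt (n + 1).lt_succ_self
  refine ⟨n + 1, v, n.succ_ne_zero, hv, ?_⟩
  simp only [Nat.even_add_one] at hnext
  by_cases hn : Even n
  · exact ⟨by simpa [hn] using hnext, by simpa [hn] using hlast⟩
  · exact ⟨by simpa [hn] using hlast, by simpa [hn] using hnext⟩

end IsAlternatingFactorization

end AlternatingFactorization

section RootPositivity

open CoxeterSystem Polynomial.Chebyshev

variable {B V W : Type*} [AddCommGroup V] [Module ℝ V] [Group W] {M : CoxeterMatrix B}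
  {cs : CoxeterSystem M W} {α : B → V} {αv : B → Module.Dual ℝ V} {ρ : W →* (V ≃ₗ[ℝ] V)}
  {s t : B} {w : W}

theorem rep_alternatingWord_root (hρ : ∀ s v, ρ (cs.simple s) v = v - αv s v • α s) {p c : ℝ}
    (hc : c ≠ 0) (hs : αv s (α s) = 2) (ht : αv t (α t) = 2) (hst : αv s (α t) = -p * c)
    (hts : αv t (α s) = -p * c⁻¹) (k : ℕ) :
    ρ (cs.wordProd (alternatingWord s t k)) (α s) =
      if Even k then (S ℝ k).eval p • α s + (c⁻¹ * (S ℝ (k - 1)).eval p) • α t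
      else (S ℝ (k - 1)).eval p • α s + (c⁻¹ * (S ℝ k).eval p) • α t := by
  induction k with
  | zero => simp [alternatingWord]
  | succ k ih =>
    have hrec : (S ℝ (k + 1 : ℕ)).eval p = p * (S ℝ k).eval p - (S ℝ (k - 1)).eval p := by
      rw [Nat.cast_succ, S_add_one]
      simp
    rw [alternatingWord_succ', wordProd_cons, map_mul, LinearEquiv.mul_apply, ih, hrec,
      Nat.cast_succ, add_sub_cancel_right]
    by_cases hk : Even k
    · simp only [hk, Nat.even_add_one, not_true_eq_false, if_true, if_false, hρ, map_add, map_smul,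
        ht, hts, smul_eq_mul]
      module
    · simp only [hk, Nat.even_add_one, not_false_eq_true, if_true, if_false, hρ, map_add, map_smul,
        hs, hst, smul_eq_mul]
      match_scalars
      · field_simp
        ring
      · ring

theorem exists_nonneg_rep_alternatingWord_root (hA : IsCartanMatrix M fun s t => αv s (α t))
    (hρ : ∀ s v, ρ (cs.simple s) v = v - αv s v • α s) (hst : s ≠ t) {k : ℕ}
    (hk : M s t ≠ 0 → k < M s t) :
    ∃ x y : ℝ, 0 ≤ x ∧ 0 ≤ y ∧
      ρ (cs.wordProd (alternatingWord s t k)) (α s) = x • α s + y • α t := by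
  obtain ⟨c, hc, hcst, hcts⟩ := hA.exists_scale hst
  have hM1 := M.off_diagonal s t hst
  have hSk := eval_S_two_mul_cos_pi_div_nonneg hM1 hk
  have hSk_pred : 0 ≤ (S ℝ (k - 1)).eval (2 * Real.cos (Real.pi / M s t)) := by
    rcases k with _ | k
    · simp
    · simpa using eval_S_two_mul_cos_pi_div_nonneg hM1 fun h => (Nat.lt_succ_self k).trans (hk h)
  rw [rep_alternatingWord_root hρ hc.ne' (hA.diag s) (hA.diag t) hcst hcts]
  split_ifs
  · exact ⟨_, _, hSk, by positivity, rfl⟩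
  · exact ⟨_, _, hSk_pred, by positivity, rfl⟩

/-- The reflection representation on the space freely spanned by the simple roots `e_s`, with
coroots determined by the Cartan matrix `A`. Its pointwise order is the order defined by the cone
of nonnegative combinations of simple roots. -/
noncomputable def rootRep {A : B → B → ℝ} (cs : CoxeterSystem M W) (hA : IsCartanMatrix M A) :
    W →* ((B →₀ ℝ) ≃ₗ[ℝ] (B →₀ ℝ)) :=
  reflectionRep (α := fun s => Finsupp.single s 1)
    (αv := fun s => Finsupp.linearCombination ℝ (A s)) cs (by simpa using hA)

variable {A : B → B → ℝ} {hA : IsCartanMatrix M A}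

theorem rootRep_simple (s : B) (x : B →₀ ℝ) :
    rootRep cs hA (cs.simple s) x =
      x - Finsupp.linearCombination ℝ (A s) x • Finsupp.single s 1 :=
  reflectionRep_simple cs _ s x

theorem IsAlternatingFactorization.rootRep_nonneg {k : ℕ} {v : W}
    (h : IsAlternatingFactorization cs s t k v w) (hst : s ≠ t) (hk : M s t ≠ 0 → k < M s t)
    (hs : 0 ≤ rootRep cs hA v (Finsupp.single s 1))
    (ht : 0 ≤ rootRep cs hA v (Finsupp.single t 1)) :
    0 ≤ rootRep cs hA w (Finsupp.single s 1) := by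
  obtain ⟨x, y, hx, hy, hxy⟩ := exists_nonneg_rep_alternatingWord_root
    (α := fun s => Finsupp.single s 1) (αv := fun s => Finsupp.linearCombination ℝ (A s))
    (cs := cs) (by simpa using hA) (rootRep_simple (hA := hA)) hst hk
  rw [h.1, map_mul, LinearEquiv.mul_apply, hxy, map_add, map_smul, map_smul]
  exact add_nonneg (smul_nonneg hx hs) (smul_nonneg hy ht)

/-- Tits: split off the longest factor alternating between `s` and a descent `t` of `w`. The
remaining element has neither descent, and the factor has length less than `m(s, t)`, since
otherwise `s` would be a descent of `w` as well. -/
theorem rootRep_nonneg_of_not_isRightDescent (h : ¬cs.IsRightDescent w s) :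
    0 ≤ rootRep cs hA w (Finsupp.single s 1) := by
  induction hn : cs.length w using Nat.strong_induction_on generalizing w s with
  | _ n ih =>
    subst hn
    rcases eq_or_ne w 1 with rfl | hw
    · simp
    obtain ⟨t, ht⟩ := cs.exists_rightDescent_of_ne_one hw
    have hst : s ≠ t := by
      rintro rfl
      exact h ht
    obtain ⟨k, v, hk, hv, hvs, hvt⟩ := IsAlternatingFactorization.exists_maximal ht s
    have hkM : M s t ≠ 0 → k < M s t := fun hM0 => by
      by_contra! hle
      obtain ⟨v', hv'⟩ := hv.exists_of_le hle
      exact h (hv'.symm.isRightDescent (M.symmetric s t ▸ hM0))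
    have hlt : cs.length v < cs.length w := hv.2 ▸ Nat.lt_add_of_pos_right (Nat.pos_of_ne_zero hk)
    exact hv.rootRep_nonneg hst hkM (ih _ hlt hvs rfl) (ih _ hlt hvt rfl)

theorem rootRep_nonpos_of_isRightDescent (h : cs.IsRightDescent w s) :
    rootRep cs hA w (Finsupp.single s 1) ≤ 0 := by
  have hneg : rootRep cs hA (w * cs.simple s) (Finsupp.single s 1) =
      -rootRep cs hA w (Finsupp.single s 1) := by
    rw [map_mul, LinearEquiv.mul_apply, rootRep_simple, Finsupp.linearCombination_single, hA.diag,
      map_sub, one_smul, map_smul]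
    module
  rw [← neg_nonneg, ← hneg]
  exact rootRep_nonneg_of_not_isRightDescent (cs.isRightDescent_iff_not_isRightDescent_mul.1 h)

theorem IsAlternatingFactorization.exists_of_isRightDescent (hst : s ≠ t)
    (hs : cs.IsRightDescent w s) (ht : cs.IsRightDescent w t) :
    M s t ≠ 0 ∧ ∃ v, IsAlternatingFactorization cs s t (M s t) v w := by
  obtain ⟨k, v, -, hv, hvs, hvt⟩ := IsAlternatingFactorization.exists_maximal ht s
  by_cases hk : M s t ≠ 0 → k < M s t
  · have hA := isCartanMatrix_neg_two_mul_cos M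
    have hnonneg : 0 ≤ rootRep cs hA w (Finsupp.single s 1) :=
      hv.rootRep_nonneg hst hk (rootRep_nonneg_of_not_isRightDescent hvs)
        (rootRep_nonneg_of_not_isRightDescent hvt)
    have hzero := (rootRep_nonpos_of_isRightDescent hs).antisymm hnonneg
    simp at hzero
  · push Not at hk
    exact ⟨hk.1, hv.exists_of_le hk.2⟩

end RootPositivity

section Matsumoto

open CoxeterSystem

variable {B W : Type*} [Group W] {M : CoxeterMatrix B} {cs : CoxeterSystem M W}

/-- A braid move replaces a factor `braidWord M i j` of a word by `braidWord M j i`. -/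
inductive BraidMove (M : CoxeterMatrix B) : List B → List B → Prop
  | mk (l₁ l₂ : List B) (i j : B) :
      BraidMove M (l₁ ++ braidWord M i j ++ l₂) (l₁ ++ braidWord M j i ++ l₂)

/-- Two words are braid equivalent if they are connected by a sequence of braid moves. -/
def BraidEquiv (M : CoxeterMatrix B) : List B → List B → Prop :=
  Relation.EqvGen (BraidMove M)

theorem BraidEquiv.append_right {l₁ l₂ : List B} (h : BraidEquiv M l₁ l₂) (l : List B) :
    BraidEquiv M (l₁ ++ l) (l₂ ++ l) := by
  induction h with
  | rel _ _ h =>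
    obtain ⟨l₁, l₂, i, j⟩ := h
    have := BraidMove.mk (M := M) l₁ (l₂ ++ l) i j
    exact .rel _ _ (by simpa only [List.append_assoc] using this)
  | refl => exact .refl _
  | symm _ _ _ ih => exact .symm _ _ ih
  | trans _ _ _ _ _ ih₁ ih₂ => exact .trans _ _ _ ih₁ ih₂

theorem isReduced_of_append_singleton {l : List B} {s : B} (h : cs.IsReduced (l ++ [s])) :
    cs.IsReduced l := by
  simpa using h.take l.length

theorem isRightDescent_of_isReduced_append_singleton {l : List B} {s : B}
    (h : cs.IsReduced (l ++ [s])) : cs.IsRightDescent (cs.wordProd (l ++ [s])) s := by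
  rw [IsRightDescent, h.eq, wordProd_append, wordProd_singleton, simple_mul_simple_cancel_right,
    (isReduced_of_append_singleton h).eq, List.length_append]
  exact Nat.lt_succ_self _

theorem IsAlternatingFactorization.isReduced_append {s t : B} {k : ℕ} {q : List B} {w : W}
    (h : IsAlternatingFactorization cs s t k (cs.wordProd q) w) (hq : cs.IsReduced q) :
    cs.IsReduced (q ++ alternatingWord s t k) := by
  rw [CoxeterSystem.IsReduced, wordProd_append, ← h.1, h.2, hq.eq, List.length_append,
    length_alternatingWord]

theorem exists_alternatingWord_eq_append_singleton (s t : B) {k : ℕ} (hk : k ≠ 0) :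
    ∃ l, alternatingWord s t k = l ++ [t] := by
  obtain ⟨n, rfl⟩ := Nat.exists_eq_succ_of_ne_zero hk
  exact ⟨_, (alternatingWord_succ s t n).trans (List.concat_eq_append)⟩

/-- Matsumoto's theorem. If the last letters `s ≠ t` of two reduced words of `w` differ, then both
are descents of `w`, so `w` also has reduced words ending in either of the two braid words in `s`
and `t`; these differ by one braid move, and each shares its last letter with a given word. -/
theorem braidEquiv_of_isReduced {l₁ l₂ : List B} (h₁ : cs.IsReduced l₁) (h₂ : cs.IsReduced l₂)
    (h : cs.wordProd l₁ = cs.wordProd l₂) : BraidEquiv M l₁ l₂ := by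
  have hlen : l₁.length = l₂.length := by rw [← h₁.eq, h, h₂.eq]
  induction hn : l₁.length generalizing l₁ l₂ with
  | zero =>
    rw [List.length_eq_zero_iff.1 hn, List.length_eq_zero_iff.1 (hlen.symm.trans hn)]
    exact .refl _
  | succ n ih =>
    have hlast : ∀ {l l' : List B} {x : B}, (l ++ [x]).length = n + 1 → cs.IsReduced (l ++ [x]) →
        cs.IsReduced (l' ++ [x]) → cs.wordProd (l ++ [x]) = cs.wordProd (l' ++ [x]) →
        BraidEquiv M (l ++ [x]) (l' ++ [x]) := fun {l l' x} hl hr hr' hw => by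
      have hlen : (l ++ [x]).length = (l' ++ [x]).length := by rw [← hr.eq, hw, hr'.eq]
      simp only [List.length_append, wordProd_append, mul_left_inj, add_left_inj] at hl hw hlen
      exact (ih (isReduced_of_append_singleton hr) (isReduced_of_append_singleton hr') hw hlen
        (Nat.succ_injective hl)).append_right [x]
    obtain ⟨l, s, rfl⟩ := l₁.eq_nil_or_concat'.resolve_left (by rintro rfl; simp at hn)
    obtain ⟨l', t, rfl⟩ := l₂.eq_nil_or_concat'.resolve_left (by rintro rfl; simp at hlen)
    rcases eq_or_ne s t with rfl | hst
    · exact hlast hn h₁ h₂ h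
    obtain ⟨hM, v, hv⟩ := IsAlternatingFactorization.exists_of_isRightDescent hst
      (isRightDescent_of_isReduced_append_singleton h₁)
      (h ▸ isRightDescent_of_isReduced_append_singleton h₂)
    obtain ⟨q, hq, rfl⟩ := cs.exists_isReduced v
    have hsymm := hv.symm
    have hrt := hv.isReduced_append hq
    have hrs := hsymm.isReduced_append hq
    have hmove : BraidEquiv M (q ++ braidWord M t s) (q ++ braidWord M s t) :=
      .rel _ _ (by simpa using BraidMove.mk (M := M) q [] t s)
    have hws := hsymm.1
    have hwt := hv.1
    rw [← wordProd_append] at hws hwt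
    obtain ⟨a, ha⟩ := exists_alternatingWord_eq_append_singleton s t hM
    obtain ⟨b, hb⟩ := exists_alternatingWord_eq_append_singleton t s (M.symmetric s t ▸ hM)
    rw [braidWord, braidWord] at hmove
    rw [ha, ← List.append_assoc] at hrt hwt hmove
    rw [hb, ← List.append_assoc] at hrs hws hmove
    refine .trans _ _ _ (hlast hn h₁ hrs hws) (.trans _ _ _ hmove ?_)
    exact hlast (by rw [← hrt.eq, ← hwt, h₁.eq, hn]) hrt h₂ (hwt.symm.trans h)

variable {V : Type*} [AddCommGroup V] [Module ℝ V] {α : B → V} {αv : B → Module.Dual ℝ V}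
  {T : ℝ} {π : ℝ → V} {l₁ l₂ : List B}

theorem BraidEquiv.pitmanWord_eqOn (h : BraidEquiv M l₁ l₂)
    (hA : IsCartanMatrix M fun s t => αv s (α t)) (hπ : CorootContinuousOn αv π (Icc 0 T)) :
    EqOn (pitmanWord α αv l₁ π) (pitmanWord α αv l₂ π) (Icc 0 T) := by
  induction h with
  | rel _ _ h =>
    obtain ⟨l₁, l₂, i, j⟩ := h
    simp only [pitmanWord_append, Function.comp_apply]
    exact _root_.pitmanWord_eqOn α αv (pitmanWord_braidWord hA (hπ.pitmanWord l₂) i j) l₁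
  | refl => exact eqOn_refl _ _
  | symm _ _ _ ih => exact ih.symm
  | trans _ _ _ _ _ ih₁ ih₂ => exact ih₁.trans ih₂

end Matsumoto

section LongestElement

open CoxeterSystem

variable {B V W : Type*} [AddCommGroup V] [Module ℝ V] [Group W] {M : CoxeterMatrix B}
  {cs : CoxeterSystem M W} {α : B → V} {αv : B → Module.Dual ℝ V} {ρ : W →* (V ≃ₗ[ℝ] V)}
  {A : B → B → ℝ} {hA : IsCartanMatrix M A} {s t : B} {w w₀ : W}

theorem isRightDescent_of_forall_length_le (hw₀ : ∀ w, cs.length w ≤ cs.length w₀) (s : B) :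
    cs.IsRightDescent w₀ s :=
  (hw₀ _).lt_of_ne (cs.length_mul_simple_ne w₀ s)

theorem rootRep_longest_nonpos (hw₀ : ∀ w, cs.length w ≤ cs.length w₀) {x : B →₀ ℝ}
    (hx : 0 ≤ x) : rootRep cs hA w₀ x ≤ 0 := by
  conv_lhs => rw [← x.sum_single, map_finsuppSum]
  refine Finset.sum_nonpos fun s _ => ?_
  beta_reduce
  rw [← Finsupp.smul_single_one, map_smul]
  exact smul_nonpos_of_nonneg_of_nonpos (hx s)
    (rootRep_nonpos_of_isRightDescent (isRightDescent_of_forall_length_le hw₀ s))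

theorem isRightDescent_longest_mul (hw₀ : ∀ w, cs.length w ≤ cs.length w₀)
    (h : ¬cs.IsRightDescent w s) : cs.IsRightDescent (w₀ * w) s := by
  by_contra hw
  have hA := isCartanMatrix_neg_two_mul_cos M
  have hnonpos : rootRep cs hA (w₀ * w) (Finsupp.single s 1) ≤ 0 := by
    rw [map_mul, LinearEquiv.mul_apply]
    exact rootRep_longest_nonpos hw₀ (rootRep_nonneg_of_not_isRightDescent h)
  have hzero := hnonpos.antisymm (rootRep_nonneg_of_not_isRightDescent hw)
  simp at hzero

theorem length_longest_mul_add_length (hw₀ : ∀ w, cs.length w ≤ cs.length w₀) (w : W) :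
    cs.length (w₀ * w) + cs.length w = cs.length w₀ := by
  induction hn : cs.length w generalizing w with
  | zero => rw [cs.length_eq_zero_iff.1 hn, mul_one, add_zero]
  | succ n ih =>
    obtain ⟨s, hs⟩ := cs.exists_rightDescent_of_ne_one (w := w) (by rintro rfl; simp at hn)
    have hws := cs.isRightDescent_iff.1 hs
    have hlong := cs.isRightDescent_iff.1
      (isRightDescent_longest_mul hw₀ (cs.isRightDescent_iff_not_isRightDescent_mul.1 hs))
    rw [← mul_assoc, simple_mul_simple_cancel_right] at hlong
    rw [← ih (w * cs.simple s) (by lia), ← mul_assoc]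
    lia

theorem exists_longest_mul_simple_eq (hw₀ : ∀ w, cs.length w ≤ cs.length w₀) (s : B) :
    ∃ t, w₀ * cs.simple s = cs.simple t * w₀ := by
  have hdesc := cs.isRightDescent_iff.1 (isRightDescent_of_forall_length_le hw₀ s)
  have hinv : cs.length (cs.simple s * w₀⁻¹) = cs.length (w₀ * cs.simple s) := by
    rw [← cs.length_inv, mul_inv_rev, inv_inv, inv_simple]
  have hone : cs.length (w₀ * (cs.simple s * w₀⁻¹)) = 1 := by
    have := length_longest_mul_add_length hw₀ (cs.simple s * w₀⁻¹)
    lia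
  obtain ⟨t, ht⟩ := cs.length_eq_one_iff.1 hone
  exact ⟨t, by rw [← ht, ← mul_assoc, inv_mul_cancel_right]⟩

theorem rep_mul_simple_comm (hρ : ∀ s v, ρ (cs.simple s) v = v - αv s v • α s)
    (h : w * cs.simple s = cs.simple t * w) (v : V) :
    αv s v • ρ w (α s) = αv t (ρ w v) • α t := by
  have := congrArg (fun w => ρ w v) h
  simp only [map_mul, LinearEquiv.mul_apply, hρ, map_sub, map_smul] at this
  exact sub_right_injective this

theorem exists_rootRep_longest_single_eq (hA : IsCartanMatrix M A)
    (hw₀ : ∀ w, cs.length w ≤ cs.length w₀) (s : B) :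
    ∃ t, w₀ * cs.simple s = cs.simple t * w₀ ∧ ∃ c : ℝ, 0 ≤ c ∧
      rootRep cs hA w₀ (Finsupp.single s 1) = -(c • Finsupp.single t 1) := by
  obtain ⟨t, ht⟩ := exists_longest_mul_simple_eq hw₀ s
  have hcomm := rep_mul_simple_comm (α := fun r => Finsupp.single r 1)
    (αv := fun r => Finsupp.linearCombination ℝ (A r)) (rootRep_simple (hA := hA)) ht
    (Finsupp.single s 1)
  have hnonpos := rootRep_longest_nonpos (hA := hA) hw₀
    (Finsupp.single_nonneg.2 zero_le_one : 0 ≤ Finsupp.single s (1 : ℝ))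
  set x := rootRep cs hA w₀ (Finsupp.single s 1)
  rw [Finsupp.linearCombination_single, hA.diag, one_smul] at hcomm
  have hx : x = (Finsupp.linearCombination ℝ (A t) x / 2) • Finsupp.single t 1 := by
    rw [div_eq_inv_mul, mul_smul, ← hcomm, inv_smul_smul₀ two_ne_zero]
  refine ⟨t, ht, -x t, neg_nonneg.2 (hnonpos t), ?_⟩
  have hxt : x t = Finsupp.linearCombination ℝ (A t) x / 2 := by
    conv_lhs => rw [hx]
    simp
  rw [neg_smul, neg_neg, hxt, ← hx]

theorem linearCombination_rootRep (hA : IsCartanMatrix M fun s t => αv s (α t))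
    (hρ : ∀ s v, ρ (cs.simple s) v = v - αv s v • α s) (w : W) (x : B →₀ ℝ) :
    Finsupp.linearCombination ℝ α (rootRep cs hA w x) =
      ρ w (Finsupp.linearCombination ℝ α x) := by
  induction w using cs.simple_induction_left generalizing x with
  | one => simp
  | mul_simple_left w s ih =>
    have hpair : ∀ y, Finsupp.linearCombination ℝ (fun t => αv s (α t)) y =
        αv s (Finsupp.linearCombination ℝ α y) := fun y =>
      (Finsupp.apply_linearCombination ℝ (αv s) α y).symm
    rw [map_mul, map_mul, LinearEquiv.mul_apply, LinearEquiv.mul_apply, rootRep_simple, map_sub,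
      map_smul, hpair, ih, hρ, Finsupp.linearCombination_single, one_smul]

theorem exists_rep_longest_root_eq (hA : IsCartanMatrix M fun s t => αv s (α t))
    (hρ : ∀ s v, ρ (cs.simple s) v = v - αv s v • α s)
    (hw₀ : ∀ w, cs.length w ≤ cs.length w₀) (s : B) :
    ∃ t, w₀ * cs.simple s = cs.simple t * w₀ ∧ ∃ c : ℝ, 0 ≤ c ∧ ρ w₀ (α s) = -(c • α t) ∧
      ∀ v, αv t (ρ w₀ v) = -(c * αv s v) := by
  obtain ⟨t, ht, c, hc, hsingle⟩ := exists_rootRep_longest_single_eq hA hw₀ s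
  have hroot : ρ w₀ (α s) = -(c • α t) := by
    simpa [hsingle] using (linearCombination_rootRep hA hρ w₀ (Finsupp.single s 1)).symm
  refine ⟨t, ht, c, hc, hroot, fun v => ?_⟩
  have hpair := congrArg (αv t) (rep_mul_simple_comm hρ ht v)
  simp only [hroot, map_neg, map_smul, smul_eq_mul, hA.diag] at hpair
  linarith

end LongestElement

section Equivariance

open CoxeterSystem

variable {B V W : Type*} [AddCommGroup V] [Module ℝ V] [Group W] {M : CoxeterMatrix B}
  {cs : CoxeterSystem M W} {α : B → V} {αv : B → Module.Dual ℝ V} {ρ : W →* (V ≃ₗ[ℝ] V)}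

theorem map_pitman {V' : Type*} [AddCommGroup V'] [Module ℝ V'] {α : V} {αv : Module.Dual ℝ V}
    {β : V'} {βv : Module.Dual ℝ V'} {c : ℝ} (hc : 0 ≤ c) (g : V →ₗ[ℝ] V') (hα : g α = c • β)
    (hαv : ∀ v, βv (g v) = c * αv v) (π : ℝ → V) :
    (fun t => g (pitman α αv π t)) = pitman β βv fun t => g (π t) := by
  funext t
  simp only [pitman_apply, map_sub, map_smul, hα, hαv, runningInf_const_mul hc, smul_smul, mul_comm]

theorem map_pitmanWord {B' V' : Type*} [AddCommGroup V'] [Module ℝ V'] {β : B' → V'}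
    {βv : B' → Module.Dual ℝ V'} {c : B → ℝ} (hc : ∀ s, 0 ≤ c s) (g : V →ₗ[ℝ] V') (f : B → B')
    (hα : ∀ s, g (α s) = c s • β (f s)) (hαv : ∀ s v, βv (f s) (g v) = c s * αv s v)
    (l : List B) (π : ℝ → V) :
    (fun t => g (pitmanWord α αv l π t)) = pitmanWord β βv (l.map f) fun t => g (π t) := by
  induction l with
  | nil => rfl
  | cons s l ih =>
    simp only [List.map_cons, pitmanWord_cons, Function.comp_apply,
      map_pitman (hc s) g (hα s) (hαv s), ih]

theorem wordProd_map_eq_conj {w : W} {f : B → B}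
    (hf : ∀ s, w * cs.simple s = cs.simple (f s) * w) (l : List B) :
    cs.wordProd (l.map f) = w * cs.wordProd l * w⁻¹ := by
  induction l with
  | nil => simp
  | cons s l ih =>
    rw [List.map_cons, wordProd_cons, wordProd_cons, ih, ← mul_assoc, ← mul_assoc, ← hf,
      mul_assoc w]

theorem CorootContinuousOn.rep {I : Set ℝ} {π : ℝ → V} (hπ : CorootContinuousOn αv π I)
    (hρ : ∀ s v, ρ (cs.simple s) v = v - αv s v • α s) (w : W) :
    CorootContinuousOn αv (fun t => ρ w (π t)) I := by
  induction w using cs.simple_induction_left with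
  | one => simpa using hπ
  | mul_simple_left w s ih =>
    intro r
    simp only [map_mul, LinearEquiv.mul_apply, hρ, map_sub, map_smul, smul_eq_mul]
    exact (ih r).sub ((ih s).mul_const _)

theorem CorootContinuousOn.neg {I : Set ℝ} {π : ℝ → V} (hπ : CorootContinuousOn αv π I) :
    CorootContinuousOn αv (fun t => -π t) I := fun s => by
  simp only [map_neg]
  exact (hπ s).neg

end Equivariance

theorem pitmanWord_neg_w0_commute_general {B V W : Type*} [AddCommGroup V] [Module ℝ V] [Group W]
    {M : CoxeterMatrix B} {cs : CoxeterSystem M W} {α : B → V} {αv : B → Module.Dual ℝ V}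
    {ρ : W →* (V ≃ₗ[ℝ] V)} {w₀ : W} {l₁ l₂ : List B} {T : ℝ} {π : ℝ → V}
    (hA : IsCartanMatrix M fun s t => αv s (α t))
    (hρ : ∀ s v, ρ (cs.simple s) v = v - αv s v • α s)
    (hw₀ : ∀ w, cs.length w ≤ cs.length w₀)
    (hl₁ : cs.wordProd l₁ = w₀) (hl₁red : cs.IsReduced l₁)
    (hl₂ : cs.wordProd l₂ = w₀) (hl₂red : cs.IsReduced l₂)
    (hπ : CorootContinuousOn αv π (Icc 0 T)) :
    EqOn (fun t => -ρ w₀ (pitmanWord α αv l₁ π t)) (pitmanWord α αv l₂ fun t => -ρ w₀ (π t))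
      (Icc 0 T) := by
  choose f hf c hc hroot hcoroot using exists_rep_longest_root_eq hA hρ hw₀
  have hprod : cs.wordProd (l₁.map f) = w₀ := by
    rw [wordProd_map_eq_conj hf, hl₁, mul_inv_cancel_right]
  have hred : cs.IsReduced (l₁.map f) := by
    rw [CoxeterSystem.IsReduced, hprod, List.length_map, ← hl₁red.eq, hl₁]
  have hequiv : (fun t => -ρ w₀ (pitmanWord α αv l₁ π t)) =
      pitmanWord α αv (l₁.map f) fun t => -ρ w₀ (π t) :=
    map_pitmanWord hc (-(ρ w₀).toLinearMap) f (by simp [hroot]) (by simp [hcoroot]) l₁ π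
  rw [hequiv]
  exact (braidEquiv_of_isReduced hred hl₂red (hprod.trans hl₂.symm)).pitmanWord_eqOn hA
    (hπ.rep hρ w₀).neg

/-- Lemma 4.5 of Biane–Bougerol–O'Connell: `(−w₀) ∘ P_{w₀} = P_{w₀} ∘ (−w₀)` as
transformations of continuous paths starting at `0`, where `w₀` is the longest element
of the finite Coxeter group `W` acting on `V` via the reflection representation `ρ`,
and `P_{w₀}` is computed along arbitrary reduced words `l₁`, `l₂` for `w₀`. -/
theorem pitmanWord_neg_w0_commute
    {V : Type*} [NormedAddCommGroup V] [NormedSpace ℝ V] [FiniteDimensional ℝ V]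
    (T : ℝ) (hT : 0 < T)
    {B : Type*} [Fintype B] {W : Type*} [Group W] [Finite W]
    (M : CoxeterMatrix B) (cs : CoxeterSystem M W)
    (α : B → V) (αv : B → Module.Dual ℝ V)
    (hpair : ∀ s, αv s (α s) = 2)
    (ρ : W →* (V ≃ₗ[ℝ] V)) (hρinj : Function.Injective ρ)
    (hρs : ∀ s v, ρ (cs.simple s) v = v - αv s v • α s)
    (hM : ∀ s s' : B, s ≠ s' →
      (M s s' = 2 ∧ αv s (α s') = 0 ∧ αv s' (α s) = 0) ∨
      (αv s (α s') < 0 ∧ αv s' (α s) < 0 ∧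
        αv s (α s') * αv s' (α s) = 4 * Real.cos (Real.pi / (M s s' : ℝ)) ^ 2))
    (w₀ : W) (hw₀ : ∀ w : W, cs.length w ≤ cs.length w₀)
    (l₁ l₂ : List B) (hl₁ : cs.wordProd l₁ = w₀) (hl₁red : cs.IsReduced l₁)
    (hl₂ : cs.wordProd l₂ = w₀) (hl₂red : cs.IsReduced l₂)
    (π : ℝ → V) (hcont : ContinuousOn π (Set.Icc 0 T)) (h0 : π 0 = 0) :
    ∀ t ∈ Set.Icc 0 T,
      -(ρ w₀ (pitmanWord α αv l₁ π t))
        = pitmanWord α αv l₂ (fun u => -(ρ w₀ (π u))) t :=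
  pitmanWord_neg_w0_commute_general (isCartanMatrix_of_pairing hpair hM) hρs hw₀ hl₁ hl₁red
    hl₂ hl₂red fun s => (αv s).continuous_of_finiteDimensional.comp_continuousOn hcont
end
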